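/- Let n ≥ 2 and 1 < p < n, and set p* = np/(n−p). There is a constant c depending only on n and p such that for every weight w with [w]_{A_{p,p*}} < ∞ and every f ∈ C_c^∞(ℝⁿ), ‖w f‖_{L^{p*}(ℝⁿ)} ≤ c · [w]_{A_{p,p*}}^{1/n'} · ‖w |∇f|‖_{L^{p}(ℝⁿ)}, where n' = n/(n−1). -/

import Mathlib

/-!
Write `u = w^{p*}`, `σ = w^{-p'}`, `r = p*/n'` and `s = p'/n'`. The exponents `r` and `s` are
conjugate, and `[w]_{A_{p,p*}}` is the `A_r` constant `K` of `u`, whose dual weight is `σ`. The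
required power `K^{1/n'}` arises from a weighted endpoint inequality combined with the sharp
dependence of the maximal function on the `A_r` constant.

* Endpoint inequality (`exists_endpoint_const`): for every density `v` of finite mass,
  `∫ |f|^{n'} v ≤ C (∫ |∇f| (Mv)^{1/n'})^{n'}`. The weak-type form bounds `|f|` by a Riesz-type
  potential of `|∇f|`, moves the potential onto `v 1_S` and splits it at the radius
  `(v(S)/Mv)^{1/n}` (`kernel_bound`). Smooth dyadic truncation upgrades it to the strong form.
* Sharp maximal inequality (`buckley`): `∫ M(hu)^s σ ≤ C K^s ∫ h^s u`. The Lebesgue maximal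
  function is dominated pointwise by an iteration of the centred maximal functions with respect to
  `u` and `σ` (`lerner_pointwise`), and these are bounded with constants independent of the measure
  by the Besicovitch covering theorem (`exists_strong_const`).
* Conclusion (`main_abs`): put `I = ∫ |f|^{p*} u`, `h = |f|^{p* - n'}` and `v = hu`. Then
  `|f|^{n'} v` and `h^s u` both integrate to `I`, and Hölder with exponents `p, p'` gives
  `I ≤ C (‖w ∇f‖_p (∫ (Mv)^s σ)^{1/p'})^{n'} ≤ C K ‖w ∇f‖_p^{n'} I^{1/s}`.
  Since `I < ∞`, dividing by `I^{1/s}` leaves `I^{1/r}`, and the power `1/n'` is the claim because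
  `r n' = p*`.

The `A_{p,p*}` condition is transferred from cubes to balls in `ball_condition`. A weight with finite
constant may vanish identically; `weight_dichotomy` shows that otherwise it is positive almost
everywhere, so that it can be replaced by a positive measurable representative.
-/

open MeasureTheory ENNReal Filter Set

noncomputable section

/-- `ℝⁿ` with the Euclidean structure. -/
abbrev En (n : ℕ) := EuclideanSpace ℝ (Fin n)

/-- Axis-parallel closed cube with corner `a` and side length `h`. -/
def cube {n : ℕ} (a : En n) (h : ℝ) : Set (En n) := {y | ∀ i, a i ≤ y i ∧ y i ≤ a i + h}

/-- Riesz potential of order `1` of a (nonnegative) function: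
`I₁ g (x) = ∫ g(y) |x-y|^{-(n-1)} dy`. -/
def riesz (n : ℕ) (g : En n → ℝ) (x : En n) : ℝ≥0∞ :=
  ∫⁻ y, ENNReal.ofReal (g y) * ENNReal.ofReal (‖x - y‖ ^ (-((n : ℝ) - 1)))

/-- The quantity `(∫ g^p dμ)^{1/p}` for an `ℝ≥0∞`-valued function `g`. -/
def lpNorm {α : Type*} [MeasurableSpace α] (p : ℝ) (g : α → ℝ≥0∞) (μ : Measure α) : ℝ≥0∞ :=
  (∫⁻ x, g x ^ p ∂μ) ^ (1 / p)

/-- Average `⨍_Q g` of an `ℝ≥0∞`-valued function over a set `Q`. -/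
def avgE {n : ℕ} (g : En n → ℝ≥0∞) (Q : Set (En n)) : ℝ≥0∞ :=
  (volume Q)⁻¹ * ∫⁻ x in Q, g x

/-- The `A_{p,p*}` constant of a weight `w`; here `ps` plays the role of `p*` and
`pp` that of `p' = p/(p-1)`:
`[w]_{A_{p,p*}} = sup_Q (⨍_Q w^{p*}) (⨍_Q w^{-p'})^{p*/p'}`. -/
def Apq (n : ℕ) (ps pp : ℝ) (w : En n → ℝ) : ℝ≥0∞ :=
  ⨆ (a : En n) (h : ℝ) (_ : 0 < h),
    avgE (fun x => ENNReal.ofReal (w x) ^ ps) (cube a h) *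
      avgE (fun x => ENNReal.ofReal (w x) ^ (-pp)) (cube a h) ^ (ps / pp)

/-- The `A_{1,s}` constant of a weight `w`: the least `c` such that
`⨍_Q w^s ≤ c · essinf_Q w^s` for every cube `Q`. -/
def A1C (n : ℕ) (s : ℝ) (w : En n → ℝ) : ℝ≥0∞ :=
  sInf {c : ℝ≥0∞ | ∀ (a : En n) (h : ℝ), 0 < h →
    avgE (fun x => ENNReal.ofReal (w x) ^ s) (cube a h) ≤
      c * essInf (fun x => ENNReal.ofReal (w x) ^ s) (volume.restrict (cube a h))}

/-- Hardy–Littlewood maximal operator over axis-parallel cubes containing `x`. -/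
def maximal (n : ℕ) (g : En n → ℝ≥0∞) (x : En n) : ℝ≥0∞ :=
  ⨆ (a : En n) (h : ℝ) (_ : 0 < h) (_ : x ∈ cube a h), avgE g (cube a h)

/-- Weak `L^s` quasinorm `sup_{t>0} t · μ{|g|>t}^{1/s}` of a real function. -/
def wnormR {α : Type*} [MeasurableSpace α] (s : ℝ) (g : α → ℝ) (μ : Measure α) : ℝ≥0∞ :=
  ⨆ (t : ℝ) (_ : 0 < t), ENNReal.ofReal t * μ {x | t < |g x|} ^ (1 / s)

section

open Metric

/-! ### Centred maximal functions with respect to arbitrary measures -/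

/-- Centred maximal function of `g` with respect to the measure `μ`, over closed Euclidean balls of
dyadic radius `2 ^ k`. The countable supremum makes measurability immediate. -/
def Mx {n : ℕ} (μ : Measure (En n)) (g : En n → ℝ≥0∞) (x : En n) : ℝ≥0∞ :=
  ⨆ k : ℤ, (μ (closedBall x ((2 : ℝ) ^ k)))⁻¹ * ∫⁻ y in closedBall x ((2 : ℝ) ^ k), g y ∂μ

lemma measurable_setLIntegral_closedBall {n : ℕ} (μ : Measure (En n)) [SFinite μ]
    {g : En n → ℝ≥0∞} (hg : Measurable g) (R : ℝ) :
    Measurable fun x => ∫⁻ y in closedBall x R, g y ∂μ := by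
  have hs : MeasurableSet {z : En n × En n | dist z.2 z.1 ≤ R} :=
    measurableSet_le (by fun_prop) measurable_const
  have h : ∀ x, ∫⁻ y in closedBall x R, g y ∂μ =
      ∫⁻ y, ({z : En n × En n | dist z.2 z.1 ≤ R}.indicator (fun z => g z.2)) (x, y) ∂μ := by
    intro x
    rw [← lintegral_indicator measurableSet_closedBall]
    rfl
  simp_rw [h]
  exact ((hg.comp measurable_snd).indicator hs).lintegral_prod_right'

lemma measurable_Mx {n : ℕ} (μ : Measure (En n)) [SFinite μ]
    {g : En n → ℝ≥0∞} (hg : Measurable g) : Measurable (Mx μ g) := by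
  refine Measurable.iSup fun k => Measurable.mul (Measurable.inv ?_) ?_
  · simpa using measurable_setLIntegral_closedBall μ (g := fun _ => 1) measurable_const ((2 : ℝ) ^ k)
  · exact measurable_setLIntegral_closedBall μ hg _

/-- Weak type `(1,1)` of `Mx μ` with a constant depending on the dimension only. Since the balls are
centred, the Besicovitch covering theorem applies to every measure `μ`, doubling or not; it needs
bounded radii, hence the exhaustion by radii `2 ^ k` with `k ≤ K`. -/
lemma exists_weak_const (n : ℕ) : ∃ N : ℕ, ∀ (μ : Measure (En n)) (g : En n → ℝ≥0∞) (l : ℝ≥0∞),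
    l * μ {x | l < Mx μ g x} ≤ N * ∫⁻ x, g x ∂μ := by
  obtain ⟨N, τ, hτ, hN⟩ := HasBesicovitchCovering.no_satelliteConfig (α := En n)
  refine ⟨N, fun μ g l => ?_⟩
  have hball : ∀ (x : En n) (R : ℝ), l < (μ (closedBall x R))⁻¹ * ∫⁻ y in closedBall x R, g y ∂μ →
      l * μ (closedBall x R) ≤ ∫⁻ y in closedBall x R, g y ∂μ := by
    intro x R h
    have h1 : l ≤ (∫⁻ y in closedBall x R, g y ∂μ) / μ (closedBall x R) := by
      rw [ENNReal.div_eq_inv_mul]; exact h.le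
    exact ENNReal.mul_le_of_le_div h1
  let S : ℕ → Set (En n) := fun K => {x | ∃ k : ℤ, k ≤ K ∧
    l < (μ (closedBall x ((2 : ℝ) ^ k)))⁻¹ * ∫⁻ y in closedBall x ((2 : ℝ) ^ k), g y ∂μ}
  have hS : {x | l < Mx μ g x} = ⋃ K, S K := by
    ext x
    simp only [Mx, lt_iSup_iff, mem_ofPred_eq, mem_iUnion, S]
    constructor
    · rintro ⟨k, hk⟩
      exact ⟨k.toNat, k, Int.self_le_toNat k, hk⟩
    · rintro ⟨K, k, -, hk⟩
      exact ⟨k, hk⟩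
  have hmono : Monotone S := by
    intro a b hab x hx
    obtain ⟨k, hk, h⟩ := hx
    exact ⟨k, hk.trans (by exact_mod_cast hab), h⟩
  rw [hS, hmono.measure_iUnion, ENNReal.mul_iSup]
  refine iSup_le fun K => ?_
  choose k hk1 hk2 using fun x : S K => x.2
  let q : Besicovitch.BallPackage (S K) (En n) :=
    { c := fun x => x
      r := fun x => (2 : ℝ) ^ (k x)
      rpos := fun x => by positivity
      r_bound := (2 : ℝ) ^ (K : ℤ)
      r_le := fun x => zpow_le_zpow_right₀ (by norm_num) (hk1 x) }
  obtain ⟨s, hs1, hs2⟩ := Besicovitch.exist_disjoint_covering_families hτ hN q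
  have hcount : ∀ i, (s i).Countable := fun i => by
    refine (hs1 i).countable_of_nonempty_interior fun j _ => ?_
    exact ⟨q.c j, ball_subset_interior_closedBall (mem_ball_self (q.rpos j))⟩
  have hcov : S K ⊆ ⋃ i : Fin N, ⋃ j ∈ s i, closedBall (q.c j) (q.r j) := by
    intro x hx
    have := hs2 ⟨⟨x, hx⟩, rfl⟩
    simp only [mem_iUnion] at this ⊢
    obtain ⟨i, j, hj, h⟩ := this
    exact ⟨i, j, hj, ball_subset_closedBall h⟩
  calc l * μ (S K) ≤ l * ∑ i : Fin N, ∑' j : s i, μ (closedBall (q.c j) (q.r j)) := by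
        gcongr
        refine (measure_mono hcov).trans ((measure_iUnion_fintype_le _ _).trans ?_)
        gcongr with i
        exact measure_biUnion_le _ (hcount i) _
    _ = ∑ i : Fin N, ∑' j : s i, l * μ (closedBall (q.c j) (q.r j)) := by
        rw [Finset.mul_sum]; simp_rw [ENNReal.tsum_mul_left]
    _ ≤ ∑ i : Fin N, ∑' j : s i, ∫⁻ y in closedBall (q.c j) (q.r j), g y ∂μ := by
        gcongr with i _ j
        exact hball _ _ (hk2 j)
    _ = ∑ i : Fin N, ∫⁻ y in ⋃ j ∈ s i, closedBall (q.c j) (q.r j), g y ∂μ := by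
        congr! with i
        exact (lintegral_biUnion (hcount i) (fun j _ => measurableSet_closedBall) (hs1 i) g).symm
    _ ≤ ∑ i : Fin N, ∫⁻ y, g y ∂μ := by
        gcongr; exact Measure.restrict_le_self
    _ = N * ∫⁻ y, g y ∂μ := by simp

lemma layer_real {b t : ℝ} (hb : 0 ≤ b) (ht : 0 < t) :
    ∫⁻ l in Ioc 0 b, ENNReal.ofReal (l ^ (t - 1)) = ENNReal.ofReal b ^ t / ENNReal.ofReal t := by
  have hi : IntervalIntegrable (fun l : ℝ => l ^ (t - 1)) volume 0 b :=
    intervalIntegral.intervalIntegrable_rpow' (by linarith)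
  rw [← ofReal_integral_eq_lintegral_ofReal]
  · rw [← intervalIntegral.integral_of_le hb, integral_rpow (Or.inl (by linarith)),
      ENNReal.ofReal_rpow_of_nonneg hb ht.le, ← ENNReal.ofReal_div_of_pos ht]
    congr 1
    simp [ht.ne']
  · exact (intervalIntegrable_iff_integrableOn_Ioc_of_le hb).1 hi
  · refine (ae_restrict_iff' measurableSet_Ioc).2 (Eventually.of_forall fun l hl => ?_)
    exact Real.rpow_nonneg hl.1.le _

/-- Layer-cake formula `∫₀^∞ 1_{l < a} l^{t-1} dl = a^t / t`, including `a = ∞`. -/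
lemma layer (a : ℝ≥0∞) {t : ℝ} (ht : 0 < t) :
    ∫⁻ l in Ioi (0 : ℝ), {l : ℝ | ENNReal.ofReal l < a}.indicator
      (fun l => ENNReal.ofReal (l ^ (t - 1))) l = a ^ t / ENNReal.ofReal t := by
  have hm : MeasurableSet {l : ℝ | ENNReal.ofReal l < a} :=
    measurableSet_lt ENNReal.measurable_ofReal measurable_const
  rw [setLIntegral_indicator hm]
  induction a with
  | top =>
    have : ({l : ℝ | ENNReal.ofReal l < ⊤} ∩ Ioi 0) = Ioi 0 := by ext; simp
    rw [this, ENNReal.top_rpow_of_pos ht, ENNReal.top_div_of_ne_top ENNReal.ofReal_ne_top]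
    refine ENNReal.eq_top_of_forall_nnreal_le fun r => ?_
    have h1 := layer_real (b := (r * t) ^ (1 / t)) (by positivity) ht
    have h2 : ENNReal.ofReal ((r * t) ^ (1 / t)) ^ t / ENNReal.ofReal t = r := by
      rw [ENNReal.ofReal_rpow_of_nonneg (by positivity) ht.le, ← Real.rpow_mul (by positivity),
        one_div_mul_cancel ht.ne', Real.rpow_one, ← ENNReal.ofReal_div_of_pos ht,
        mul_div_cancel_right₀ _ ht.ne', ENNReal.ofReal_coe_nnreal]
    rw [← h2, ← h1]
    exact lintegral_mono_set Ioc_subset_Ioi_self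
  | coe b =>
    have : ({l : ℝ | ENNReal.ofReal l < b} ∩ Ioi 0) = Ioo 0 (b : ℝ) := by
      ext l
      simp only [mem_inter_iff, mem_ofPred_eq, mem_Ioi, mem_Ioo]
      rw [and_comm]
      refine and_congr_right fun hl => ?_
      rw [← ENNReal.ofReal_coe_nnreal, ENNReal.ofReal_lt_ofReal_iff_of_nonneg hl.le]
    rw [this, setLIntegral_congr Ioo_ae_eq_Ioc, layer_real (NNReal.coe_nonneg b) ht, ENNReal.ofReal_coe_nnreal]

/-- Marcinkiewicz splitting: the part of `g` below height `c` contributes at most `c` to `Mx μ g`. -/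
lemma Mx_le_add {n : ℕ} (μ : Measure (En n)) (g : En n → ℝ≥0∞) (c : ℝ≥0∞)
    (x : En n) : Mx μ g x ≤ Mx μ ({y | c < g y}.indicator g) x + c := by
  refine iSup_le fun k => ?_
  set B := closedBall x ((2 : ℝ) ^ k)
  have h1 : ∫⁻ y in B, g y ∂μ ≤ ∫⁻ y in B, {y | c < g y}.indicator g y ∂μ + c * μ B := by
    rw [← setLIntegral_const, ← lintegral_add_right _ measurable_const]
    refine lintegral_mono fun y => ?_
    by_cases h : c < g y
    · simp [indicator, h]
    · simp [indicator, h]; exact not_lt.1 h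
  calc _ ≤ (μ B)⁻¹ * (∫⁻ y in B, {y | c < g y}.indicator g y ∂μ + c * μ B) := by gcongr
    _ = (μ B)⁻¹ * ∫⁻ y in B, {y | c < g y}.indicator g y ∂μ + c * ((μ B)⁻¹ * μ B) := by ring
    _ ≤ Mx μ ({y | c < g y}.indicator g) x + c := by
        gcongr
        · exact le_iSup (fun k : ℤ => (μ (closedBall x ((2 : ℝ) ^ k)))⁻¹ *
            ∫⁻ y in closedBall x ((2 : ℝ) ^ k), {y | c < g y}.indicator g y ∂μ) k
        · exact mul_le_of_le_one_right' (ENNReal.inv_mul_le_one _)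

/-- `Mx μ` is bounded on `L^s(μ)` for `1 < s`, uniformly in the measure `μ` (Marcinkiewicz
interpolation between the weak `(1,1)` bound and the trivial `L^∞` bound). -/
lemma exists_strong_const (n : ℕ) {s : ℝ} (hs : 1 < s) : ∃ C : ℝ≥0∞, C ≠ ∞ ∧
    ∀ (μ : Measure (En n)) [SFinite μ] (g : En n → ℝ≥0∞), Measurable g →
    ∫⁻ x, Mx μ g x ^ s ∂μ ≤ C * ∫⁻ x, g x ^ s ∂μ := by
  obtain ⟨N, hN⟩ := exists_weak_const n
  have hs0 : 0 < s := by linarith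
  have hs1 : 0 < s - 1 := by linarith
  refine ⟨ENNReal.ofReal s * (2 * N * (2 ^ (s - 1) / ENNReal.ofReal (s - 1))), ?_, ?_⟩
  · refine ENNReal.mul_ne_top ENNReal.ofReal_ne_top (ENNReal.mul_ne_top (by finiteness)
      (ENNReal.div_ne_top (by finiteness) (by simpa using hs1)))
  intro μ _ g hg
  have hM := measurable_Mx μ hg
  have key : ∀ l ∈ Ioi (0 : ℝ), ENNReal.ofReal (l ^ (s - 1)) * μ {x | ENNReal.ofReal l < Mx μ g x} ≤
      2 * N * ∫⁻ x, {l : ℝ | ENNReal.ofReal l < 2 * g x}.indicator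
        (fun l => ENNReal.ofReal (l ^ (s - 1 - 1))) l * g x ∂μ := by
    intro l hl
    have hl : 0 < l := hl
    set c := ENNReal.ofReal (l / 2) with hc
    have hcc : c + c = ENNReal.ofReal l := by
      rw [hc, ← ENNReal.ofReal_add (by positivity) (by positivity)]; congr 1; ring
    have h1 : c * μ {x | ENNReal.ofReal l < Mx μ g x} ≤ N * ∫⁻ x, {y | c < g y}.indicator g x ∂μ := by
      refine le_trans ?_ (hN μ _ c)
      refine mul_le_mul_right (measure_mono fun x hx => ?_) _
      have hx : ENNReal.ofReal l < Mx μ g x := hx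
      have := hx.trans_le (Mx_le_add μ g c x)
      rw [← hcc] at this
      exact lt_of_add_lt_add_right this
    have h2 : ENNReal.ofReal (l ^ (s - 1)) = 2 * ENNReal.ofReal (l ^ (s - 1 - 1)) * c := by
      rw [hc, ← ENNReal.ofReal_ofNat, ← ENNReal.ofReal_mul (by norm_num),
        ← ENNReal.ofReal_mul (by positivity)]
      congr 1
      rw [Real.rpow_sub_one hl.ne' (s - 1)]; field_simp
    calc _ = 2 * ENNReal.ofReal (l ^ (s - 1 - 1)) * (c * μ {x | ENNReal.ofReal l < Mx μ g x}) := by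
          rw [h2]; ring
      _ ≤ 2 * ENNReal.ofReal (l ^ (s - 1 - 1)) * (N * ∫⁻ x, {y | c < g y}.indicator g x ∂μ) := by
          gcongr
      _ = 2 * N * ∫⁻ x, ENNReal.ofReal (l ^ (s - 1 - 1)) * {y | c < g y}.indicator g x ∂μ := by
          rw [lintegral_const_mul' _ _ ENNReal.ofReal_ne_top]; ring
      _ = _ := by
          congr 1
          refine lintegral_congr fun x => ?_
          have h3 : c < g x ↔ ENNReal.ofReal l < 2 * g x := by
            rw [← hcc, ← two_mul]
            exact (ENNReal.mul_lt_mul_iff_right (by norm_num) (by norm_num)).symm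
          by_cases h : c < g x
          · simp [indicator, h, h3.1 h]
          · simp [indicator, h, mt h3.2 h]
  have hmeas1 : Measurable (Function.uncurry fun (x : En n) (l : ℝ) =>
      {l : ℝ | ENNReal.ofReal l < Mx μ g x}.indicator (fun l => ENNReal.ofReal (l ^ (s - 1))) l) := by
    refine Measurable.indicator (s := {z : En n × ℝ | ENNReal.ofReal z.2 < Mx μ g z.1})
      (f := fun z => ENNReal.ofReal (z.2 ^ (s - 1))) (by fun_prop) ?_
    exact measurableSet_lt (by fun_prop) (by fun_prop)
  have hmeas2 : Measurable (Function.uncurry fun (l : ℝ) (x : En n) =>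
      {l : ℝ | ENNReal.ofReal l < 2 * g x}.indicator
        (fun l => ENNReal.ofReal (l ^ (s - 1 - 1))) l * g x) := by
    refine Measurable.mul (Measurable.indicator (s := {z : ℝ × En n | ENNReal.ofReal z.1 < 2 * g z.2})
      (f := fun z => ENNReal.ofReal (z.1 ^ (s - 1 - 1))) (by fun_prop) ?_) (by fun_prop)
    exact measurableSet_lt (by fun_prop) (by fun_prop)
  calc ∫⁻ x, Mx μ g x ^ s ∂μ
      = ENNReal.ofReal s * ∫⁻ x, Mx μ g x ^ s / ENNReal.ofReal s ∂μ := by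
        rw [← lintegral_const_mul' _ _ ENNReal.ofReal_ne_top]
        refine lintegral_congr fun x => ?_
        rw [ENNReal.mul_div_cancel (by simpa using hs0) ENNReal.ofReal_ne_top]
    _ = ENNReal.ofReal s * ∫⁻ x, (∫⁻ l in Ioi (0 : ℝ), {l : ℝ | ENNReal.ofReal l < Mx μ g x}.indicator
      (fun l => ENNReal.ofReal (l ^ (s - 1))) l) ∂μ := by
        congr 1; exact lintegral_congr fun x => (layer _ hs0).symm
    _ = ENNReal.ofReal s * ∫⁻ l in Ioi (0 : ℝ),
          ENNReal.ofReal (l ^ (s - 1)) * μ {x | ENNReal.ofReal l < Mx μ g x} := by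
        congr 1
        rw [lintegral_lintegral_swap hmeas1.aemeasurable]
        refine lintegral_congr fun l => ?_
        rw [← lintegral_indicator_const (measurableSet_lt measurable_const hM)]
        rfl
    _ ≤ ENNReal.ofReal s * ∫⁻ l in Ioi (0 : ℝ), 2 * N * ∫⁻ x,
          {l : ℝ | ENNReal.ofReal l < 2 * g x}.indicator
            (fun l => ENNReal.ofReal (l ^ (s - 1 - 1))) l * g x ∂μ := by
        gcongr 1
        exact setLIntegral_mono' measurableSet_Ioi key
    _ = ENNReal.ofReal s * (2 * N * ∫⁻ x, (2 * g x) ^ (s - 1) / ENNReal.ofReal (s - 1) * g x ∂μ) := by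
        congr 1
        rw [lintegral_const_mul' _ _ (by finiteness), lintegral_lintegral_swap hmeas2.aemeasurable]
        congr 1
        refine lintegral_congr fun x => ?_
        rw [lintegral_mul_const, layer _ hs1]
        exact Measurable.indicator (by fun_prop)
          (measurableSet_lt ENNReal.measurable_ofReal measurable_const)
    _ = ENNReal.ofReal s * (2 * N * ∫⁻ x, (2 ^ (s - 1) / ENNReal.ofReal (s - 1)) * g x ^ s ∂μ) := by
        congr 2
        refine lintegral_congr fun x => ?_
        have : g x ^ s = g x ^ (s - 1) * g x := by
          conv_lhs => rw [show s = (s - 1) + 1 by ring]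
          rw [ENNReal.rpow_add_of_nonneg _ _ hs1.le zero_le_one, ENNReal.rpow_one]
        rw [ENNReal.mul_rpow_of_nonneg _ _ hs1.le, this]
        simp only [div_eq_mul_inv]; ring
    _ = _ := by
        rw [lintegral_const_mul']
        · ring
        · exact (ENNReal.div_ne_top (by finiteness) (by simpa using hs1))

/-! ### The sharp weighted maximal inequality -/

lemma le_Mx {n : ℕ} (μ : Measure (En n)) (g : En n → ℝ≥0∞) (x : En n) (k : ℤ) :
    (μ (closedBall x ((2 : ℝ) ^ k)))⁻¹ * ∫⁻ y in closedBall x ((2 : ℝ) ^ k), g y ∂μ ≤ Mx μ g x :=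
  le_iSup (fun k : ℤ => (μ (closedBall x ((2 : ℝ) ^ k)))⁻¹ *
    ∫⁻ y in closedBall x ((2 : ℝ) ^ k), g y ∂μ) k

lemma volume_closedBall_mul {n : ℕ} (x : En n) {c R : ℝ} (hc : 0 ≤ c) (hR : 0 ≤ R) :
    volume (closedBall x (c * R)) = ENNReal.ofReal (c ^ n) * volume (closedBall x R) := by
  rw [Measure.addHaar_closedBall _ _ (mul_nonneg hc hR), Measure.addHaar_closedBall _ _ hR,
    ← mul_assoc, ← ENNReal.ofReal_mul (by positivity)]
  simp [mul_pow]

lemma withDensity_ball_ne_zero {n : ℕ} {u : En n → ℝ≥0∞} (hu : Measurable u)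
    (hu0 : ∀ x, u x ≠ 0) (x : En n) {R : ℝ} (hR : 0 < R) :
    (volume.withDensity u) (closedBall x R) ≠ 0 := by
  rw [Ne, withDensity_apply_eq_zero hu]
  have : {x | u x ≠ 0} = univ := by ext; simp [hu0]
  rw [this, univ_inter]
  exact (measure_closedBall_pos volume x hR).ne'

/-- Pointwise bound of the Lebesgue maximal function of `hu` by an iteration of weighted centred
maximal functions (Lerner). For a ball `B` of radius `R`, the integral of `h du` over `B`
divided by the `u`-measure of the concentric ball of radius `3R` is a lower bound for `M_u h` on
`B`; the `A_r` condition bounds that `u`-measure by a negative power of the `σ`-measure of the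
larger ball. -/
lemma lerner_pointwise {n : ℕ} {r s : ℝ} (hrs : r.HolderConjugate s) {u σ : En n → ℝ≥0∞}
    (hu : Measurable u) (hσ : Measurable σ) (hu0 : ∀ x, u x ≠ 0)
    (hσ0 : ∀ x, σ x ≠ 0) (hσt : ∀ x, σ x ≠ ∞) {K : ℝ≥0∞} (hKt : K ≠ ∞)
    (hK : ∀ (x : En n) (R : ℝ), 0 < R → (volume.withDensity u) (closedBall x R) *
      (volume.withDensity σ) (closedBall x R) ^ (r - 1) ≤ K * volume (closedBall x R) ^ r)
    {h : En n → ℝ≥0∞} (hh : Measurable h) (x : En n) :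
    Mx volume (fun y => h y * u y) x ≤ K * ENNReal.ofReal (3 ^ n) ^ r *
      Mx (volume.withDensity σ) (fun y => Mx (volume.withDensity u) h y ^ (s - 1) * (σ y)⁻¹) x
        ^ (r - 1) := by
  have hr1 : 0 < r - 1 := by linarith [hrs.lt]
  have hs1 : 0 < s - 1 := by linarith [hrs.symm.lt]
  have hrs1 : (s - 1) * (r - 1) = 1 := by
    have := hrs.mul_eq_add; linarith
  refine iSup_le fun k => ?_
  set R : ℝ := (2 : ℝ) ^ k with hRdef
  have hR : 0 < R := by positivity
  set U := volume.withDensity u with hU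
  set S := volume.withDensity σ with hS
  have : SFinite U := by rw [hU]; infer_instance
  set B := closedBall x R with hB
  set B3 := closedBall x (3 * R) with hB3
  have hBB3 : B ⊆ B3 := closedBall_subset_closedBall (by linarith)
  have hU0 : U B3 ≠ 0 := withDensity_ball_ne_zero hu hu0 x (by linarith)
  have hS0 : S B3 ≠ 0 := withDensity_ball_ne_zero hσ hσ0 x (by linarith)
  have hvB0 : volume B ≠ 0 := (measure_closedBall_pos volume x hR).ne'
  have hvBt : volume B ≠ ∞ := measure_closedBall_lt_top.ne
  have hv3 : volume B3 = ENNReal.ofReal (3 ^ n) * volume B :=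
    volume_closedBall_mul x (by norm_num) hR.le
  have hK3 := hK x (3 * R) (by linarith)
  rw [← hB3, hv3, ENNReal.mul_rpow_of_nonneg _ _ hrs.nonneg] at hK3
  have hfin : U B3 * S B3 ^ (r - 1) ≠ ∞ := by
    refine ne_top_of_le_ne_top ?_ hK3
    have := hrs.nonneg
    finiteness
  have hSt : S B3 ≠ ∞ := by
    intro h
    rw [h, ENNReal.top_rpow_of_pos hr1, ENNReal.mul_top hU0] at hfin
    exact hfin rfl
  have hUt : U B3 ≠ ∞ := by
    intro h
    rw [h, ENNReal.top_mul] at hfin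
    · exact hfin rfl
    · simp [ENNReal.rpow_eq_zero_iff, hS0, hSt]
  set X := (U B3)⁻¹ * ∫⁻ y in B, h y ∂U with hX
  -- for `z ∈ B` the ball of radius `2R` about `z` lies between `B` and `B3`
  have hXle : ∀ z ∈ B, X ≤ Mx U h z := by
    intro z hz
    refine le_trans ?_ (le_Mx U h z (k + 1))
    have h2 : (2 : ℝ) ^ (k + 1) = 2 * R := by rw [zpow_add_one₀ (by norm_num)]; ring
    rw [h2, hX]
    have hz' : dist z x ≤ R := hz
    gcongr
    · exact closedBall_subset_closedBall' (by linarith)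
    · exact closedBall_subset_closedBall' (by rw [dist_comm]; linarith)
  have hint : ∫⁻ y in B, h y * u y = U B3 * X := by
    rw [hX, ← mul_assoc, ENNReal.mul_inv_cancel hU0 hUt, one_mul, hU,
      setLIntegral_withDensity_eq_setLIntegral_mul _ hu hh measurableSet_closedBall]
    refine lintegral_congr fun y => ?_
    simp [mul_comm]
  have hXint : volume B * X ^ (s - 1) ≤ ∫⁻ y in B, Mx U h y ^ (s - 1) * (σ y)⁻¹ ∂S := by
    rw [hS, setLIntegral_withDensity_eq_setLIntegral_mul _ hσ _ measurableSet_closedBall]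
    · rw [mul_comm, ← setLIntegral_const]
      refine setLIntegral_mono' measurableSet_closedBall fun y hy => ?_
      have : (σ * fun y => Mx U h y ^ (s - 1) * (σ y)⁻¹) y = Mx U h y ^ (s - 1) := by
        simp only [Pi.mul_apply]
        rw [mul_comm, mul_assoc, ENNReal.inv_mul_cancel (hσ0 y) (hσt y), mul_one]
      rw [this]
      gcongr
      exact hXle y hy
    · exact ((measurable_Mx U hh).pow_const _).mul hσ.inv
  have hUB : U B3 ≤ K * (ENNReal.ofReal (3 ^ n) ^ r * volume B ^ r) * ((S B3)⁻¹) ^ (r - 1) := by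
    have : S B3 ^ (r - 1) * ((S B3)⁻¹) ^ (r - 1) = 1 := by
      rw [← ENNReal.mul_rpow_of_nonneg _ _ hr1.le, ENNReal.mul_inv_cancel hS0 hSt, ENNReal.one_rpow]
    calc U B3 = U B3 * S B3 ^ (r - 1) * ((S B3)⁻¹) ^ (r - 1) := by rw [mul_assoc, this, mul_one]
      _ ≤ _ := by gcongr
  have hvr : (volume B)⁻¹ * volume B ^ r = volume B ^ (r - 1) := by
    rw [ENNReal.rpow_sub _ _ hvB0 hvBt, ENNReal.rpow_one, ENNReal.div_eq_inv_mul]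
  have hXpow : X = (X ^ (s - 1)) ^ (r - 1) := by
    rw [← ENNReal.rpow_mul, hrs1, ENNReal.rpow_one]
  calc (volume B)⁻¹ * ∫⁻ y in B, h y * u y = (volume B)⁻¹ * (U B3 * X) := by rw [hint]
    _ ≤ (volume B)⁻¹ *
        (K * (ENNReal.ofReal (3 ^ n) ^ r * volume B ^ r) * ((S B3)⁻¹) ^ (r - 1) * X) := by gcongr
    _ = K * ENNReal.ofReal (3 ^ n) ^ r *
        (((volume B)⁻¹ * volume B ^ r) * ((S B3)⁻¹) ^ (r - 1) * X) := by ring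
    _ = K * ENNReal.ofReal (3 ^ n) ^ r * ((S B3)⁻¹ * (volume B * X ^ (s - 1))) ^ (r - 1) := by
        rw [hvr]
        conv_lhs => rw [hXpow]
        rw [← ENNReal.mul_rpow_of_nonneg _ _ hr1.le, ← ENNReal.mul_rpow_of_nonneg _ _ hr1.le]
        congr 2
        ring
    _ ≤ K * ENNReal.ofReal (3 ^ n) ^ r *
        ((S B)⁻¹ * ∫⁻ y in B, Mx U h y ^ (s - 1) * (σ y)⁻¹ ∂S) ^ (r - 1) := by gcongr
    _ ≤ _ := by
        gcongr
        exact le_Mx S (fun y => Mx U h y ^ (s - 1) * (σ y)⁻¹) x k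

/-- Sharp weighted maximal inequality (Buckley): if `u` satisfies the `A_r` condition on balls with
constant `K` and `σ = u^{1-s}` is its dual weight, then `∫ M(hu)^s σ ≤ C K^s ∫ h^s u` with `C`
depending on `n` and `r` only. By `lerner_pointwise` it follows from the boundedness of the centred
maximal functions with respect to `σ` on `L^r(σ)` and to `u` on `L^s(u)`, whose norms do not
depend on the weights. -/
lemma buckley (n : ℕ) {r s : ℝ} (hrs : r.HolderConjugate s) : ∃ C : ℝ≥0∞, C ≠ ∞ ∧
    ∀ (u σ : En n → ℝ≥0∞), Measurable u → Measurable σ → (∀ x, u x ≠ 0) →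
    (∀ x, σ x ≠ 0) → (∀ x, σ x ≠ ∞) → (∀ x, σ x ^ (1 - r) = u x) → ∀ K : ℝ≥0∞, K ≠ ∞ →
    (∀ (x : En n) (R : ℝ), 0 < R → (volume.withDensity u) (closedBall x R) *
      (volume.withDensity σ) (closedBall x R) ^ (r - 1) ≤ K * volume (closedBall x R) ^ r) →
    ∀ h : En n → ℝ≥0∞, Measurable h →
    ∫⁻ x, Mx volume (fun y => h y * u y) x ^ s * σ x ≤ C * K ^ s * ∫⁻ x, h x ^ s * u x := by
  obtain ⟨C1, hC1, h1⟩ := exists_strong_const n hrs.lt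
  obtain ⟨C2, hC2, h2⟩ := exists_strong_const n hrs.symm.lt
  have hs0 : 0 ≤ s := hrs.symm.nonneg
  have hr0 : 0 ≤ r := hrs.nonneg
  have hr1 : 0 < r - 1 := by linarith [hrs.lt]
  have hs1 : 0 < s - 1 := by linarith [hrs.symm.lt]
  refine ⟨(ENNReal.ofReal (3 ^ n) ^ r) ^ s * C1 * C2, by finiteness, ?_⟩
  intro u σ hu hσ hu0 hσ0 hσt hσu K hKt hK h hh
  have hpt := lerner_pointwise hrs hu hσ hu0 hσ0 hσt hKt hK hh
  set U := volume.withDensity u with hU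
  set S := volume.withDensity σ with hS
  have : SFinite U := by rw [hU]; infer_instance
  have : SFinite S := by rw [hS]; infer_instance
  set G := fun y => Mx U h y ^ (s - 1) * (σ y)⁻¹ with hG
  have hmU := measurable_Mx U hh
  have hGm : Measurable G := (hmU.pow_const _).mul hσ.inv
  have e1 : (r - 1) * s = r := by have := hrs.mul_eq_add; linarith
  have e2 : (s - 1) * r = s := by have := hrs.mul_eq_add; linarith
  have hGr : ∀ x, σ x * G x ^ r = u x * Mx U h x ^ s := by
    intro x
    rw [hG]; dsimp only
    rw [ENNReal.mul_rpow_of_nonneg _ _ hr0, ← ENNReal.rpow_mul, e2, ← hσu x,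
      ENNReal.rpow_sub _ _ (hσ0 x) (hσt x), ENNReal.rpow_one, ENNReal.inv_rpow, div_eq_mul_inv]
    ring
  calc ∫⁻ x, Mx volume (fun y => h y * u y) x ^ s * σ x
      ≤ ∫⁻ x, (K * ENNReal.ofReal (3 ^ n) ^ r * Mx S G x ^ (r - 1)) ^ s * σ x := by
        gcongr with x; exact hpt x
    _ = ∫⁻ x, (K * ENNReal.ofReal (3 ^ n) ^ r) ^ s * (σ x * Mx S G x ^ r) := by
        refine lintegral_congr fun x => ?_
        rw [ENNReal.mul_rpow_of_nonneg _ _ hs0, ← ENNReal.rpow_mul, e1]; ring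
    _ = (K * ENNReal.ofReal (3 ^ n) ^ r) ^ s * ∫⁻ x, Mx S G x ^ r ∂S := by
        rw [lintegral_const_mul' _ _ (by finiteness)]
        congr 1
        exact (lintegral_withDensity_eq_lintegral_mul _ hσ ((measurable_Mx S hGm).pow_const r)).symm
    _ ≤ (K * ENNReal.ofReal (3 ^ n) ^ r) ^ s * (C1 * ∫⁻ x, G x ^ r ∂S) := by
        gcongr; exact h1 S G hGm
    _ = (K * ENNReal.ofReal (3 ^ n) ^ r) ^ s * (C1 * ∫⁻ x, Mx U h x ^ s ∂U) := by
        congr 2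
        rw [hS, hU, lintegral_withDensity_eq_lintegral_mul _ hσ (hGm.pow_const r),
          lintegral_withDensity_eq_lintegral_mul _ hu (hmU.pow_const s)]
        exact lintegral_congr hGr
    _ ≤ (K * ENNReal.ofReal (3 ^ n) ^ r) ^ s * (C1 * (C2 * ∫⁻ x, h x ^ s ∂U)) := by
        gcongr; exact h2 U h hh
    _ = _ := by
        rw [hU, lintegral_withDensity_eq_lintegral_mul _ hu (hh.pow_const s),
          ENNReal.mul_rpow_of_nonneg _ _ hs0]
        have : (∫⁻ x, (u * fun x => h x ^ s) x) = ∫⁻ x, h x ^ s * u x :=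
          lintegral_congr fun x => by simp [mul_comm]
        rw [this]; ring

/-! ### Potential estimates -/

lemma scale_ball {n : ℕ} {φ : En n → ℝ≥0∞} (hφ : Measurable φ) (x : En n) {t : ℝ} (ht : 0 < t) :
    ∫⁻ z in closedBall (0 : En n) 1, φ (x + t • z) =
      (ENNReal.ofReal (t ^ n))⁻¹ * ∫⁻ y in closedBall x t, φ y := by
  have hψ : Measurable ((closedBall x t).indicator φ) := hφ.indicator measurableSet_closedBall
  have h1 : ∀ z, (closedBall (0 : En n) 1).indicator (fun z => φ (x + t • z)) z =
      (closedBall x t).indicator φ (x + t • z) := by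
    intro z
    have : z ∈ closedBall (0 : En n) 1 ↔ x + t • z ∈ closedBall x t := by
      simp [mem_closedBall, dist_eq_norm, norm_smul, abs_of_pos ht, ht]
    by_cases hz : z ∈ closedBall (0 : En n) 1
    · rw [indicator_of_mem hz, indicator_of_mem (this.1 hz)]
    · rw [indicator_of_notMem hz, indicator_of_notMem (mt this.2 hz)]
  rw [← lintegral_indicator measurableSet_closedBall, lintegral_congr h1,
    ← lintegral_map (f := fun w => (closedBall x t).indicator φ (x + w)) (g := fun z => t • z)
      (hψ.comp (measurable_const_add x)) (measurable_const_smul t),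
    Measure.map_addHaar_smul _ ht.ne', lintegral_smul_measure,
    lintegral_add_left_eq_self, lintegral_indicator measurableSet_closedBall]
  rw [abs_of_pos (by positivity), ENNReal.ofReal_inv_of_pos (by positivity)]
  simp

/-- Fundamental theorem of calculus along the half-line from `x` in direction `z`. -/
lemma line_bound {n : ℕ} {F : En n → ℝ} (hF : ContDiff ℝ 1 F) (hc : HasCompactSupport F)
    (x : En n) {z : En n} (hz0 : z ≠ 0) (hz : ‖z‖ ≤ 1) :
    ‖F x‖ₑ ≤ ∫⁻ t in Ioi (0 : ℝ), ‖fderiv ℝ F (x + t • z)‖ₑ := by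
  have hz1 : (-z) ≠ 0 := neg_ne_zero.2 hz0
  have hemb : Topology.IsClosedEmbedding (fun t : ℝ => x + t • (-z)) :=
    (Homeomorph.addLeft x).isClosedEmbedding.comp (isClosedEmbedding_smul_left hz1)
  have h1 := HasCompactSupport.enorm_le_lintegral_Ici_deriv (f := fun t : ℝ => F (x + t • (-z)))
    (by fun_prop) (hc.comp_isClosedEmbedding hemb) 0
  simp only [zero_smul, add_zero] at h1
  refine h1.trans ?_
  have h2 : ∀ t : ℝ, ‖deriv (fun t : ℝ => F (x + t • (-z))) t‖ₑ ≤
      ‖fderiv ℝ F (x + (-t) • z)‖ₑ := by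
    intro t
    have hd : HasDerivAt (fun t : ℝ => x + t • (-z)) (-z) t := by
      simpa using ((hasDerivAt_id t).smul_const (-z)).const_add x
    have := ((hF.differentiable (by norm_num)) (x + t • (-z))).hasFDerivAt.comp_hasDerivAt t hd
    have e : deriv (fun t : ℝ => F (x + t • (-z))) t = fderiv ℝ F (x + t • (-z)) (-z) := this.deriv
    rw [e, show (-t) • z = t • (-z) by simp, enorm_le_iff_norm_le]
    refine (ContinuousLinearMap.le_opNorm _ _).trans ?_
    rw [norm_neg]
    exact mul_le_of_le_one_right (norm_nonneg _) hz
  calc _ ≤ ∫⁻ t in Iic (0 : ℝ), ‖fderiv ℝ F (x + (-t) • z)‖ₑ := by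
        gcongr with t; exact h2 t
    _ = ∫⁻ t in Iio (0 : ℝ), ‖fderiv ℝ F (x + (-t) • z)‖ₑ := setLIntegral_congr Iio_ae_eq_Iic.symm
    _ = ∫⁻ t in Ioi (0 : ℝ), ‖fderiv ℝ F (x + t • z)‖ₑ := by
        have := (Measure.measurePreserving_neg (volume : Measure ℝ)).setLIntegral_comp_preimage_emb
          (MeasurableEquiv.neg ℝ).measurableEmbedding
          (fun t => ‖fderiv ℝ F (x + t • z)‖ₑ) (Ioi 0)
        rw [← this]
        simp

/-- Pointwise potential estimate, obtained by averaging `line_bound` over `z` in the unit ball. The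
right-hand side is a form of the Riesz potential `I₁(|∇F|)(x)`, written as an integral over
radii so that no polar coordinates are needed. -/
lemma potential {n : ℕ} (hn : 0 < n) {F : En n → ℝ} (hF : ContDiff ℝ 1 F)
    (hc : HasCompactSupport F) (x : En n) :
    volume (closedBall (0 : En n) 1) * ‖F x‖ₑ ≤ ∫⁻ t in Ioi (0 : ℝ),
      (ENNReal.ofReal (t ^ n))⁻¹ * ∫⁻ y in closedBall x t, ‖fderiv ℝ F y‖ₑ := by
  have hF' : Continuous (fderiv ℝ F) := hF.continuous_fderiv (by norm_num)
  have : Nonempty (Fin n) := ⟨⟨0, hn⟩⟩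
  calc volume (closedBall (0 : En n) 1) * ‖F x‖ₑ
      = ∫⁻ z in closedBall (0 : En n) 1, ‖F x‖ₑ := by rw [setLIntegral_const, mul_comm]
    _ ≤ ∫⁻ z in closedBall (0 : En n) 1, ∫⁻ t in Ioi (0 : ℝ), ‖fderiv ℝ F (x + t • z)‖ₑ := by
        refine lintegral_mono_ae ?_
        have h0 : ∀ᵐ z : En n, z ≠ 0 := by simp [ae_iff]
        filter_upwards [ae_restrict_mem measurableSet_closedBall, ae_restrict_of_ae h0] with z hz hz0
        exact line_bound hF hc x hz0 (by simpa using hz)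
    _ = ∫⁻ t in Ioi (0 : ℝ), ∫⁻ z in closedBall (0 : En n) 1, ‖fderiv ℝ F (x + t • z)‖ₑ := by
        refine lintegral_lintegral_swap (Continuous.measurable ?_).aemeasurable
        simp only [Function.uncurry_def]
        fun_prop
    _ = _ := by
        refine setLIntegral_congr_fun measurableSet_Ioi fun t ht => ?_
        exact scale_ball (φ := fun y => ‖fderiv ℝ F y‖ₑ) hF'.enorm.measurable x ht

/-- The potential estimate integrated against `V` over `S`, with the potential moved onto `V`
by Tonelli. -/
lemma potential_dual {n : ℕ} (hn : 0 < n) {F : En n → ℝ} (hF : ContDiff ℝ 1 F)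
    (hc : HasCompactSupport F) (V : Measure (En n)) [SFinite V] (S : Set (En n)) :
    volume (closedBall (0 : En n) 1) * ∫⁻ x in S, ‖F x‖ₑ ∂V ≤
      ∫⁻ y, ‖fderiv ℝ F y‖ₑ * ∫⁻ t in Ioi (0 : ℝ),
        (ENNReal.ofReal (t ^ n))⁻¹ * V.restrict S (closedBall y t) := by
  have hF' : Continuous (fderiv ℝ F) := hF.continuous_fderiv (by norm_num)
  have hFm : Measurable fun y => ‖fderiv ℝ F y‖ₑ := hF'.enorm.measurable
  set W := V.restrict S
  have hset : MeasurableSet {q : (En n × En n) × ℝ | dist q.1.2 q.1.1 ≤ q.2} :=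
    measurableSet_le (by fun_prop) (by fun_prop)
  -- the kernel on triples `((x, y), t)`
  set k : (En n × En n) × ℝ → ℝ≥0∞ := {q : (En n × En n) × ℝ | dist q.1.2 q.1.1 ≤ q.2}.indicator
    (fun q => (ENNReal.ofReal (q.2 ^ n))⁻¹ * ‖fderiv ℝ F q.1.2‖ₑ) with hk
  have hkm : Measurable k := Measurable.indicator (by fun_prop) hset
  have hk1 : ∀ x t, (ENNReal.ofReal (t ^ n))⁻¹ * ∫⁻ y in closedBall x t, ‖fderiv ℝ F y‖ₑ =
      ∫⁻ y, k ((x, y), t) := by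
    intro x t
    rw [← lintegral_const_mul _ hFm, ← lintegral_indicator measurableSet_closedBall]
    rfl
  have hk2 : ∀ y t, ∫⁻ x, k ((x, y), t) ∂W =
      ‖fderiv ℝ F y‖ₑ * ((ENNReal.ofReal (t ^ n))⁻¹ * W (closedBall y t)) := by
    intro y t
    rw [← mul_assoc, ← lintegral_indicator_const measurableSet_closedBall]
    refine lintegral_congr fun x => ?_
    simp only [hk, indicator, mem_ofPred_eq, mem_closedBall, dist_comm y x]
    split_ifs <;> ring
  calc volume (closedBall (0 : En n) 1) * ∫⁻ x, ‖F x‖ₑ ∂W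
      = ∫⁻ x, volume (closedBall (0 : En n) 1) * ‖F x‖ₑ ∂W :=
        (lintegral_const_mul _ hF.continuous.enorm.measurable).symm
    _ ≤ ∫⁻ x, (∫⁻ t in Ioi (0 : ℝ), ∫⁻ y, k ((x, y), t)) ∂W := by
        refine lintegral_mono fun x => (potential hn hF hc x).trans_eq ?_
        exact lintegral_congr fun t => hk1 x t
    _ = ∫⁻ x, (∫⁻ y, ∫⁻ t in Ioi (0 : ℝ), k ((x, y), t)) ∂W := by
        refine lintegral_congr fun x => lintegral_lintegral_swap (Measurable.aemeasurable ?_)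
        exact hkm.comp (by fun_prop : Measurable fun q : ℝ × En n => ((x, q.2), q.1))
    _ = ∫⁻ y, ∫⁻ x, (∫⁻ t in Ioi (0 : ℝ), k ((x, y), t)) ∂W := by
        refine lintegral_lintegral_swap (Measurable.aemeasurable ?_)
        exact hkm.lintegral_prod_right'
    _ = ∫⁻ y, ∫⁻ t in Ioi (0 : ℝ), ∫⁻ x, k ((x, y), t) ∂W := by
        refine lintegral_congr fun y => lintegral_lintegral_swap (Measurable.aemeasurable ?_)
        exact hkm.comp (by fun_prop : Measurable fun q : En n × ℝ => ((q.1, y), q.2))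
    _ = _ := by
        refine lintegral_congr fun y => ?_
        simp_rw [hk2]
        rw [lintegral_const_mul' _ _ (by simp)]

/-- The dyadic maximal function controls averages over balls of every radius, up to `2 ^ n`. -/
lemma ball_le_Mx {n : ℕ} (v : En n → ℝ≥0∞) (y : En n) {t : ℝ} (ht : 0 < t) :
    (ENNReal.ofReal (t ^ n))⁻¹ * ∫⁻ z in closedBall y t, v z ≤
      2 ^ n * volume (closedBall (0 : En n) 1) * Mx volume v y := by
  obtain ⟨k, hk1, hk2⟩ := exists_mem_Ioc_zpow ht (one_lt_two (α := ℝ))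
  have hR : 0 < (2 : ℝ) ^ (k + 1) := by positivity
  have hle : (2 : ℝ) ^ (k + 1) ≤ 2 * t := by rw [zpow_add_one₀ (by norm_num)]; linarith
  have hB0 : volume (closedBall y ((2 : ℝ) ^ (k + 1))) ≠ 0 := (measure_closedBall_pos volume y hR).ne'
  have hBt : volume (closedBall y ((2 : ℝ) ^ (k + 1))) ≠ ∞ := measure_closedBall_lt_top.ne
  have h1 : ∫⁻ z in closedBall y ((2 : ℝ) ^ (k + 1)), v z ≤
      volume (closedBall y ((2 : ℝ) ^ (k + 1))) * Mx volume v y := by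
    rw [mul_comm, ← ENNReal.div_le_iff hB0 hBt, ENNReal.div_eq_inv_mul]
    exact le_Mx volume v y (k + 1)
  have h2 : volume (closedBall y ((2 : ℝ) ^ (k + 1))) ≤
      ENNReal.ofReal (t ^ n) * (2 ^ n * volume (closedBall (0 : En n) 1)) := by
    calc _ ≤ volume (closedBall y (2 * t)) := measure_mono (closedBall_subset_closedBall hle)
      _ = _ := by
        rw [Measure.addHaar_closedBall _ _ (by positivity), finrank_euclideanSpace_fin, mul_pow,
          mul_comm (2 ^ n : ℝ), ENNReal.ofReal_mul (by positivity),
          ENNReal.ofReal_pow (p := (2 : ℝ)) (by norm_num), ENNReal.ofReal_ofNat, mul_assoc,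
          Measure.addHaar_closedBall _ _ zero_le_one]
        simp
  have ht0 : ENNReal.ofReal (t ^ n) ≠ 0 := by simp; positivity
  calc _ ≤ (ENNReal.ofReal (t ^ n))⁻¹ * (ENNReal.ofReal (t ^ n) *
          (2 ^ n * volume (closedBall (0 : En n) 1)) * Mx volume v y) := by
        gcongr
        refine (lintegral_mono_set (closedBall_subset_closedBall hk2)).trans (h1.trans ?_)
        gcongr
    _ = ((ENNReal.ofReal (t ^ n))⁻¹ * ENNReal.ofReal (t ^ n)) *
          (2 ^ n * volume (closedBall (0 : En n) 1) * Mx volume v y) := by ring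
    _ = _ := by rw [ENNReal.inv_mul_cancel ht0 ENNReal.ofReal_ne_top, one_mul]

lemma tail_integral {n : ℕ} (hn : 2 ≤ n) {R : ℝ} (hR : 0 < R) :
    ∫⁻ t in Ioi R, (ENNReal.ofReal (t ^ n))⁻¹ ≤ ENNReal.ofReal R ^ (1 - (n : ℝ)) := by
  have hn' : (2 : ℝ) ≤ n := by exact_mod_cast hn
  have h1 : ∫⁻ t in Ioi R, (ENNReal.ofReal (t ^ n))⁻¹ = ∫⁻ t in Ioi R, ENNReal.ofReal (t ^ (-(n : ℝ))) := by
    refine setLIntegral_congr_fun measurableSet_Ioi fun t ht => ?_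
    have ht0 : 0 < t := hR.trans ht
    rw [← ENNReal.ofReal_inv_of_pos (by positivity), Real.rpow_neg ht0.le, Real.rpow_natCast]
  rw [h1, ← ofReal_integral_eq_lintegral_ofReal, integral_Ioi_rpow_of_lt (by linarith) hR,
    ENNReal.ofReal_rpow_of_pos hR]
  · refine ENNReal.ofReal_le_ofReal ?_
    rw [show -(n : ℝ) + 1 = 1 - n by ring, neg_div, ← div_neg]
    exact div_le_self (by positivity) (by linarith)
  · exact integrableOn_Ioi_rpow_of_lt (by linarith) hR
  · refine (ae_restrict_iff' measurableSet_Ioi).2 (Eventually.of_forall fun l hl => ?_)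
    exact Real.rpow_nonneg (hR.le.trans (le_of_lt hl)) _

/-- Hedberg-type bound for the potential of `V = v dx` restricted to `S`: radii below
`(V(S) / Mv(y))^{1/n}` are estimated by the maximal function, larger radii by the total mass
`V(S)`. -/
lemma kernel_bound {n : ℕ} (hn : 2 ≤ n) (v : En n → ℝ≥0∞) (S : Set (En n))
    (hS : (volume.withDensity v) S ≠ ∞) (y : En n) :
    ∫⁻ t in Ioi (0 : ℝ), (ENNReal.ofReal (t ^ n))⁻¹ *
        (volume.withDensity v).restrict S (closedBall y t) ≤
      (2 ^ n * volume (closedBall (0 : En n) 1) + 1) *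
        ((volume.withDensity v) S ^ (1 / (n : ℝ)) * Mx volume v y ^ (1 - 1 / (n : ℝ))) := by
  have hn' : (2 : ℝ) ≤ n := by exact_mod_cast hn
  have hn0 : (0 : ℝ) < n := by linarith
  have hlt : 1 / (n : ℝ) < 1 := by rw [div_lt_one hn0]; linarith
  set V := volume.withDensity v with hV
  set T := V S with hT
  set M := Mx volume v y with hM
  set ω := volume (closedBall (0 : En n) 1)
  have hVle : ∀ t, V.restrict S (closedBall y t) ≤ T := fun t => by
    rw [Measure.restrict_apply measurableSet_closedBall]; exact measure_mono inter_subset_right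
  have hVle2 : ∀ t, V.restrict S (closedBall y t) ≤ ∫⁻ z in closedBall y t, v z := fun t => by
    rw [← withDensity_apply _ measurableSet_closedBall]
    exact Measure.restrict_apply_le S (closedBall y t)
  by_cases hT0 : T = 0
  · have : ∀ t, V.restrict S (closedBall y t) = 0 := fun t => le_antisymm (hT0 ▸ hVle t) zero_le
    simp [this]
  by_cases hMt : M = ∞
  · rw [hMt, ENNReal.top_rpow_of_pos (by linarith), ENNReal.mul_top, ENNReal.mul_top]
    · exact le_top
    · simp
    · simp [ENNReal.rpow_eq_zero_iff, hT0, hS]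
  -- `Mv(y) = 0` forces `v = 0` almost everywhere, hence `T = 0`
  by_cases hM0 : M = 0
  · exfalso
    have h0 : ∀ k : ℕ, V (closedBall y ((2 : ℝ) ^ k)) = 0 := by
      intro k
      rw [hV, withDensity_apply _ measurableSet_closedBall]
      have := ball_le_Mx v y (t := (2 : ℝ) ^ k) (by positivity)
      rw [← hM, hM0, mul_zero, le_zero_iff, mul_eq_zero] at this
      exact this.resolve_left (by simp)
    have hun : V univ = 0 := by
      have : (⋃ k : ℕ, closedBall y ((2 : ℝ) ^ k)) = univ := by
        refine eq_univ_of_forall fun z => mem_iUnion.2 ?_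
        obtain ⟨k, hk⟩ := pow_unbounded_of_one_lt (dist z y) (one_lt_two (α := ℝ))
        exact ⟨k, hk.le⟩
      rw [← this]
      exact measure_iUnion_null h0
    exact hT0 (measure_mono_null (subset_univ S) hun)
  -- the radius at which the two bounds for the mass of the ball balance
  set ρ : ℝ≥0∞ := (T / M) ^ (1 / (n : ℝ)) with hρ
  have hTM0 : T / M ≠ 0 := ENNReal.div_ne_zero.2 ⟨hT0, hMt⟩
  have hTMt : T / M ≠ ∞ := ENNReal.div_ne_top hS hM0
  have hρ0 : ρ ≠ 0 := by simp [hρ, ENNReal.rpow_eq_zero_iff, hTM0, hTMt]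
  have hρt : ρ ≠ ∞ := by rw [hρ]; finiteness
  set R := ρ.toReal
  have hR : 0 < R := ENNReal.toReal_pos hρ0 hρt
  have hRρ : ENNReal.ofReal R = ρ := ENNReal.ofReal_toReal hρt
  have near : ∫⁻ t in Ioc 0 R, (ENNReal.ofReal (t ^ n))⁻¹ * V.restrict S (closedBall y t) ≤
      2 ^ n * ω * M * ρ := by
    calc _ ≤ ∫⁻ t in Ioc 0 R, 2 ^ n * ω * M := by
          refine setLIntegral_mono' measurableSet_Ioc fun t ht => ?_
          exact le_trans (by gcongr; exact hVle2 t) (ball_le_Mx v y ht.1)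
      _ = _ := by rw [setLIntegral_const, Real.volume_Ioc, sub_zero, hRρ]
  have far : ∫⁻ t in Ioi R, (ENNReal.ofReal (t ^ n))⁻¹ * V.restrict S (closedBall y t) ≤
      ρ ^ (1 - (n : ℝ)) * T := by
    calc _ ≤ ∫⁻ t in Ioi R, (ENNReal.ofReal (t ^ n))⁻¹ * T := by gcongr with t; exact hVle t
      _ = (∫⁻ t in Ioi R, (ENNReal.ofReal (t ^ n))⁻¹) * T := lintegral_mul_const' _ _ hS
      _ ≤ _ := by rw [← hRρ]; gcongr; exact tail_integral hn hR
  have e1 : M * ρ = T ^ (1 / (n : ℝ)) * M ^ (1 - 1 / (n : ℝ)) := by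
    rw [hρ, ENNReal.div_rpow_of_nonneg _ _ (by positivity), ENNReal.rpow_sub _ _ hM0 hMt,
      ENNReal.rpow_one]
    simp only [div_eq_mul_inv]
    ring
  have e2 : ρ ^ (1 - (n : ℝ)) * T = T ^ (1 / (n : ℝ)) * M ^ (1 - 1 / (n : ℝ)) := by
    have : 1 / (n : ℝ) * (1 - n) = -(1 - 1 / n) := by field_simp; ring
    rw [hρ, ← ENNReal.rpow_mul, this, ENNReal.rpow_neg, ← ENNReal.inv_rpow,
      ENNReal.inv_div (Or.inl hMt) (Or.inl hM0), ENNReal.div_rpow_of_nonneg _ _ (by linarith),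
      ENNReal.rpow_sub 1 _ hT0 hS, ENNReal.rpow_one, div_eq_mul_inv, ENNReal.div_eq_inv_mul,
      ENNReal.mul_inv (Or.inr (by finiteness)) (Or.inr ?_), inv_inv]
    · calc _ = T ^ (1 / (n : ℝ)) * M ^ (1 - 1 / (n : ℝ)) * (T⁻¹ * T) := by ring
        _ = _ := by rw [ENNReal.inv_mul_cancel hT0 hS, mul_one]
    · simp [hT0]
  rw [← Ioc_union_Ioi_eq_Ioi hR.le]
  refine (lintegral_union_le _ _ _).trans ((add_le_add near far).trans_eq ?_)
  rw [e2, mul_assoc _ M ρ, e1]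
  ring

/-! ### The endpoint inequality -/

/-- Weak-type form of the endpoint `p = 1` inequality:
`V(S)^{1/n'} ≤ C ∫ |∇F| (Mv)^{1/n'}` whenever `|F| ≥ 1` on `S`, where `V = v dx`. -/
lemma exists_endpoint_weak_const {n : ℕ} (hn : 2 ≤ n) : ∃ C : ℝ≥0∞, C ≠ ∞ ∧
    ∀ (F : En n → ℝ), ContDiff ℝ 1 F → HasCompactSupport F →
    ∀ (v : En n → ℝ≥0∞) (S : Set (En n)), MeasurableSet S →
      (volume.withDensity v) S ≠ ∞ → (∀ x ∈ S, 1 ≤ ‖F x‖ₑ) →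
      (volume.withDensity v) S ^ (1 - 1 / (n : ℝ)) ≤
        C * ∫⁻ y, ‖fderiv ℝ F y‖ₑ * Mx volume v y ^ (1 - 1 / (n : ℝ)) := by
  have hn' : (2 : ℝ) ≤ n := by exact_mod_cast hn
  have hlt : 1 / (n : ℝ) < 1 := by rw [div_lt_one (by linarith)]; linarith
  have hω0 : volume (closedBall (0 : En n) 1) ≠ 0 := (measure_closedBall_pos volume _ one_pos).ne'
  have hωt : volume (closedBall (0 : En n) 1) ≠ ∞ := measure_closedBall_lt_top.ne
  set ω := volume (closedBall (0 : En n) 1)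
  refine ⟨ω⁻¹ * (2 ^ n * ω + 1), by finiteness, ?_⟩
  intro F hF hc v S hSm hS h1
  set V := volume.withDensity v with hV
  have : SFinite V := by rw [hV]; infer_instance
  set θ := 1 - 1 / (n : ℝ) with hθ
  set T := V S with hT
  by_cases hT0 : T = 0
  · rw [hT0, ENNReal.zero_rpow_of_pos (by linarith)]; exact zero_le
  have hTn0 : T ^ (1 / (n : ℝ)) ≠ 0 := by simp [ENNReal.rpow_eq_zero_iff, hT0, hS]
  have hTnt : T ^ (1 / (n : ℝ)) ≠ ∞ := ENNReal.rpow_ne_top_of_nonneg (by positivity) hS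
  set J := ∫⁻ y, ‖fderiv ℝ F y‖ₑ * Mx volume v y ^ θ with hJ
  have main : ω * T ≤ (2 ^ n * ω + 1) * T ^ (1 / (n : ℝ)) * J := by
    calc ω * T ≤ ω * ∫⁻ x in S, ‖F x‖ₑ ∂V := by
          gcongr
          rw [hT, ← setLIntegral_one]
          exact setLIntegral_mono' hSm h1
      _ ≤ ∫⁻ y, ‖fderiv ℝ F y‖ₑ * ∫⁻ t in Ioi (0 : ℝ),
            (ENNReal.ofReal (t ^ n))⁻¹ * V.restrict S (closedBall y t) :=
          potential_dual (by omega) hF hc V S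
      _ ≤ ∫⁻ y, ‖fderiv ℝ F y‖ₑ * ((2 ^ n * ω + 1) * (T ^ (1 / (n : ℝ)) * Mx volume v y ^ θ)) := by
          gcongr with y
          exact kernel_bound hn v S hS y
      _ = ∫⁻ y, (2 ^ n * ω + 1) * T ^ (1 / (n : ℝ)) * (‖fderiv ℝ F y‖ₑ * Mx volume v y ^ θ) := by
          refine lintegral_congr fun y => ?_
          ring
      _ = _ := by rw [lintegral_const_mul' _ _ (by finiteness)]
  have hTθ : T ^ θ = T * (T ^ (1 / (n : ℝ)))⁻¹ := by
    rw [hθ, ENNReal.rpow_sub _ _ hT0 hS, ENNReal.rpow_one, div_eq_mul_inv]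
  calc T ^ θ = ω⁻¹ * (ω * T) * (T ^ (1 / (n : ℝ)))⁻¹ := by
        rw [hTθ, ← mul_assoc, ENNReal.inv_mul_cancel hω0 hωt, one_mul]
    _ ≤ ω⁻¹ * ((2 ^ n * ω + 1) * T ^ (1 / (n : ℝ)) * J) * (T ^ (1 / (n : ℝ)))⁻¹ := by gcongr
    _ = ω⁻¹ * (2 ^ n * ω + 1) * J * (T ^ (1 / (n : ℝ)) * (T ^ (1 / (n : ℝ)))⁻¹) := by ring
    _ = _ := by rw [ENNReal.mul_inv_cancel hTn0 hTnt, mul_one]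

/-- Smooth even truncation, equal to `0` for `|t| ≤ 1` and to `1` for `|t| ≥ 2`. -/
def cutoff (t : ℝ) : ℝ := Real.smoothTransition (t ^ 2 - 1)

lemma cutoff_contDiff : ContDiff ℝ 1 cutoff :=
  (Real.smoothTransition.contDiff (n := 1)).comp (by fun_prop)

lemma cutoff_eq_one {t : ℝ} (ht : 2 ≤ |t|) : cutoff t = 1 := by
  refine Real.smoothTransition.one_of_one_le ?_
  have : 2 ^ 2 ≤ |t| ^ 2 := by gcongr
  rw [sq_abs] at this; linarith

lemma cutoff_eq_zero {t : ℝ} (ht : |t| ≤ 1) : cutoff t = 0 := by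
  refine Real.smoothTransition.zero_of_nonpos ?_
  have : |t| ^ 2 ≤ 1 := by nlinarith [abs_nonneg t]
  rw [sq_abs] at this; linarith

lemma deriv_cutoff_eq_zero {t : ℝ} (ht : |t| ≤ 1 ∨ 2 ≤ |t|) : deriv cutoff t = 0 := by
  rcases ht with ht | ht
  · refine IsLocalMin.deriv_eq_zero (Eventually.of_forall fun y => ?_)
    rw [cutoff_eq_zero ht]; exact Real.smoothTransition.nonneg _
  · refine IsLocalMax.deriv_eq_zero (Eventually.of_forall fun y => ?_)
    rw [cutoff_eq_one ht]; exact Real.smoothTransition.le_one _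

lemma exists_deriv_cutoff_bound : ∃ L : NNReal, ∀ t, ‖deriv cutoff t‖ₑ ≤ L := by
  have hcont : Continuous (deriv cutoff) := cutoff_contDiff.continuous_deriv (by norm_num)
  obtain ⟨L, hL⟩ := (isCompact_Icc (a := (-2 : ℝ)) (b := 2)).exists_bound_of_continuousOn
    hcont.continuousOn
  refine ⟨L.toNNReal, fun t => ?_⟩
  by_cases ht : 2 ≤ |t|
  · rw [deriv_cutoff_eq_zero (Or.inr ht)]; simp
  · have := hL t (abs_le.1 (not_le.1 ht).le)
    rw [← ofReal_norm]
    exact ENNReal.ofReal_le_ofReal this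

lemma tsum_rpow_le {ι : Type*} (a : ι → ℝ≥0∞) {q : ℝ} (hq : 1 ≤ q) :
    ∑' i, a i ^ q ≤ (∑' i, a i) ^ q := by
  have h : ∀ x : ℝ≥0∞, x ^ q = x * x ^ (q - 1) := fun x => by
    conv_lhs => rw [show q = 1 + (q - 1) by ring]
    rw [ENNReal.rpow_add_of_nonneg _ _ zero_le_one (by linarith), ENNReal.rpow_one]
  rw [h (∑' i, a i), ← ENNReal.tsum_mul_right]
  refine ENNReal.tsum_le_tsum fun i => ?_
  rw [h (a i)]
  have : 0 ≤ q - 1 := by linarith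
  gcongr
  exact ENNReal.le_tsum i

/-- Endpoint `p = 1` inequality `∫ |f|^{n'} v ≤ C (∫ |∇f| (Mv)^{1/n'})^{n'}`, valid for every
density `v` of finite mass. The weak-type form is applied to the truncations
`cutoff (2^{-k} f)`, whose gradients live on the disjoint shells `2^k ≤ |f| < 2^{k+1}`; summing
over `k` loses nothing because `n' ≥ 1`. -/
lemma exists_endpoint_const {n : ℕ} (hn : 2 ≤ n) : ∃ C : ℝ≥0∞, C ≠ ∞ ∧
    ∀ (f : En n → ℝ), ContDiff ℝ 1 f → HasCompactSupport f →
    ∀ (v : En n → ℝ≥0∞), (volume.withDensity v) univ ≠ ∞ →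
      ∫⁻ x, ‖f x‖ₑ ^ (1 / (1 - 1 / (n : ℝ))) ∂(volume.withDensity v) ≤
        C * (∫⁻ y, ‖fderiv ℝ f y‖ₑ * Mx volume v y ^ (1 - 1 / (n : ℝ))) ^
          (1 / (1 - 1 / (n : ℝ))) := by
  have hn' : (2 : ℝ) ≤ n := by exact_mod_cast hn
  have hlt : 1 / (n : ℝ) < 1 := by rw [div_lt_one (by linarith)]; linarith
  have hpos : 0 < 1 / (n : ℝ) := by positivity
  obtain ⟨C1, hC1, hweak⟩ := exists_endpoint_weak_const hn
  obtain ⟨L, hL⟩ := exists_deriv_cutoff_bound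
  set θ := 1 - 1 / (n : ℝ) with hθ
  have hθ0 : 0 < θ := by linarith
  set q := 1 / θ with hq
  have hq1 : 1 ≤ q := by rw [hq, le_div_iff₀ hθ0]; linarith
  have hq0 : 0 ≤ q := by linarith
  refine ⟨4 ^ q * (C1 * L) ^ q, by finiteness, ?_⟩
  intro f hf hc v hv
  set V := volume.withDensity v with hV
  set P : En n → ℝ≥0∞ := fun y => ‖fderiv ℝ f y‖ₑ * Mx volume v y ^ θ with hP
  let D : ℤ → Set (En n) := fun k => {x | |f x| ∈ Ico ((2 : ℝ) ^ k) ((2 : ℝ) ^ (k + 1))}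
  let S : ℤ → Set (En n) := fun k => {x | (2 : ℝ) ^ (k + 1) ≤ |f x|}
  have hfm : Measurable f := hf.continuous.measurable
  have hDm : ∀ k, MeasurableSet (D k) := fun k => by
    have : Measurable fun x => |f x| := hf.continuous.abs.measurable
    exact this measurableSet_Ico
  have hSm : ∀ k, MeasurableSet (S k) := fun k =>
    measurableSet_le measurable_const hf.continuous.abs.measurable
  have hDd : Pairwise (Function.onFun Disjoint D) := by
    have hmono : ∀ i j : ℤ, i < j → Disjoint (D i) (D j) := by
      intro i j hij
      refine disjoint_left.2 fun x hx hx' => ?_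
      have : (2 : ℝ) ^ (i + 1) ≤ (2 : ℝ) ^ j := zpow_le_zpow_right₀ (by norm_num) hij
      exact absurd (this.trans hx'.1) (not_le.2 hx.2)
    intro i j hij
    rcases lt_or_gt_of_ne hij with h | h
    · exact hmono i j h
    · exact (hmono j i h).symm
  let e : ℤ → ℝ≥0∞ := fun k => ENNReal.ofReal ((2 : ℝ) ^ k)
  have he0 : ∀ k, e k ≠ 0 := fun k => by simp only [e]; simp; positivity
  have het : ∀ k, e k ≠ ∞ := fun k => ENNReal.ofReal_ne_top
  -- weak endpoint estimate at level `2 ^ k`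
  have hk : ∀ k : ℤ, V (S k) ^ θ * e k ≤ C1 * L * ∫⁻ y in D k, P y := by
    intro k
    set c : ℝ := (2 : ℝ) ^ (-k) with hcdef
    have hc0 : 0 < c := by positivity
    have hck : c * 2 ^ k = 1 := by rw [hcdef, ← zpow_add₀ (by norm_num)]; simp
    have hck1 : c * 2 ^ (k + 1) = 2 := by rw [hcdef, ← zpow_add₀ (by norm_num)]; simp
    set F : En n → ℝ := fun x => cutoff (c * f x) with hFdef
    have hF : ContDiff ℝ 1 F := cutoff_contDiff.comp (contDiff_const.mul hf)
    have hFc : HasCompactSupport F :=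
      hc.comp_left (g := fun t => cutoff (c * t)) (by simp [cutoff_eq_zero])
    have hF1 : ∀ x ∈ S k, 1 ≤ ‖F x‖ₑ := by
      intro x hx
      have : F x = 1 := cutoff_eq_one (by
        rw [abs_mul, abs_of_pos hc0, ← hck1]
        exact mul_le_mul_of_nonneg_left hx hc0.le)
      rw [this]; simp
    have hder : ∀ x, ‖fderiv ℝ F x‖ₑ ≤ (D k).indicator (fun x => L * (e k)⁻¹ * ‖fderiv ℝ f x‖ₑ) x := by
      intro x
      have h1 : HasFDerivAt (fun x => c * f x) (c • fderiv ℝ f x) x :=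
        ((hf.differentiable (by norm_num)) x).hasFDerivAt.const_mul c
      have h2 : HasDerivAt cutoff (deriv cutoff (c * f x)) (c * f x) :=
        ((cutoff_contDiff.differentiable (by norm_num)) _).hasDerivAt
      have h4 := HasDerivAt.comp_hasFDerivAt (f := fun x => c * f x) x h2 h1
      have h3 : fderiv ℝ F x = deriv cutoff (c * f x) • c • fderiv ℝ f x := h4.fderiv
      by_cases hx : x ∈ D k
      · rw [indicator_of_mem hx, h3, enorm_smul, enorm_smul, ← mul_assoc]
        gcongr
        · exact hL _
        · rw [Real.enorm_of_nonneg hc0.le, hcdef, zpow_neg,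
            ENNReal.ofReal_inv_of_pos (by positivity)]
      · rw [indicator_of_notMem hx, h3, deriv_cutoff_eq_zero, zero_smul]
        · exact (enorm_zero (E := En n →L[ℝ] ℝ)).le
        · rw [abs_mul, abs_of_pos hc0]
          by_cases hlow : |f x| < 2 ^ k
          · left; rw [← hck]; gcongr
          · right
            rw [← hck1]
            gcongr
            by_contra hcon
            exact hx ⟨not_lt.1 hlow, not_le.1 hcon⟩
    have hw := hweak F hF hFc v (S k) (hSm k) (ne_top_of_le_ne_top hv (measure_mono (subset_univ _))) hF1
    calc V (S k) ^ θ * e k ≤ (C1 * ∫⁻ y, ‖fderiv ℝ F y‖ₑ * Mx volume v y ^ θ) * e k := by gcongr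
      _ ≤ (C1 * ∫⁻ y, (D k).indicator (fun y => L * (e k)⁻¹ * P y) y) * e k := by
          gcongr with y
          calc _ ≤ (D k).indicator (fun x => L * (e k)⁻¹ * ‖fderiv ℝ f x‖ₑ) y * Mx volume v y ^ θ := by
                gcongr; exact hder y
            _ = _ := by
                by_cases hy : y ∈ D k
                · simp only [indicator_of_mem hy, hP]; ring
                · simp [indicator_of_notMem hy]
      _ = C1 * L * (∫⁻ y in D k, P y) * ((e k)⁻¹ * e k) := by
          have h0 := he0 k
          rw [lintegral_indicator (hDm k), lintegral_const_mul' _ _ (by finiteness)]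
          ring
      _ = _ := by rw [ENNReal.inv_mul_cancel (he0 k) (het k), mul_one]
  have hk' : ∀ k : ℤ, e k ^ q * V (S k) ≤ (C1 * L) ^ q * (∫⁻ y in D k, P y) ^ q := by
    intro k
    have := ENNReal.rpow_le_rpow (hk k) hq0
    rw [ENNReal.mul_rpow_of_nonneg _ _ hq0, ENNReal.mul_rpow_of_nonneg _ _ hq0, ← ENNReal.rpow_mul,
      hq, mul_one_div_cancel hθ0.ne', ENNReal.rpow_one, mul_comm] at this
    exact this
  -- `4` appears because `2^{k+1} = 4 * 2^{k-1}`: a point with `2^k ≤ |f x| < 2^{k+1}` is charged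
  -- to the level `k - 1`
  have hpt : ∀ x, ‖f x‖ₑ ^ q ≤ ∑' k : ℤ, (S k).indicator (fun _ => 4 ^ q * e k ^ q) x := by
    intro x
    by_cases hx : f x = 0
    · rw [hx, enorm_zero, ENNReal.zero_rpow_of_pos (by linarith)]; exact zero_le
    obtain ⟨k, hk1, hk2⟩ := exists_mem_Ico_zpow (abs_pos.2 hx) (one_lt_two (α := ℝ))
    refine le_trans ?_ (ENNReal.le_tsum (k - 1))
    have hxS : x ∈ S (k - 1) := by
      change (2 : ℝ) ^ (k - 1 + 1) ≤ |f x|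
      rwa [sub_add_cancel]
    rw [indicator_of_mem hxS, ← ENNReal.mul_rpow_of_nonneg _ _ hq0]
    gcongr
    rw [← ofReal_norm, Real.norm_eq_abs, show (4 : ℝ≥0∞) = ENNReal.ofReal 4 by simp,
      ← ENNReal.ofReal_mul (by norm_num)]
    refine ENNReal.ofReal_le_ofReal (hk2.le.trans_eq ?_)
    rw [show k + 1 = (k - 1) + 2 by ring, zpow_add₀ (by norm_num)]
    norm_num [mul_comm]
  calc ∫⁻ x, ‖f x‖ₑ ^ q ∂V ≤ ∫⁻ x, ∑' k : ℤ, (S k).indicator (fun _ => 4 ^ q * e k ^ q) x ∂V :=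
        lintegral_mono hpt
    _ = ∑' k : ℤ, 4 ^ q * (e k ^ q * V (S k)) := by
        rw [lintegral_tsum fun k => (measurable_const.indicator (hSm k)).aemeasurable]
        congr! 2 with k
        rw [lintegral_indicator_const (hSm k)]; ring
    _ ≤ ∑' k : ℤ, 4 ^ q * ((C1 * L) ^ q * (∫⁻ y in D k, P y) ^ q) := by
        refine ENNReal.tsum_le_tsum fun k => ?_
        gcongr _ * ?_
        exact hk' k
    _ = 4 ^ q * (C1 * L) ^ q * ∑' k : ℤ, (∫⁻ y in D k, P y) ^ q := by
        rw [ENNReal.tsum_mul_left, ENNReal.tsum_mul_left, mul_assoc]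
    _ ≤ 4 ^ q * (C1 * L) ^ q * (∑' k : ℤ, ∫⁻ y in D k, P y) ^ q := by
        gcongr; exact tsum_rpow_le _ hq1
    _ = 4 ^ q * (C1 * L) ^ q * (∫⁻ y in ⋃ k, D k, P y) ^ q := by
        rw [lintegral_iUnion hDm hDd]
    _ ≤ 4 ^ q * (C1 * L) ^ q * (∫⁻ y, P y) ^ q := by
        gcongr; exact Measure.restrict_le_self

/-! ### The exponents and the weighted Sobolev inequality -/

/-- Arithmetic of the exponents, with `θ = 1/n'`: the exponents `r = p* θ` and `s = p' θ` are
conjugate, `A_{p,p*}` for `w` is `A_r` for `w^{p*}`, and `|f|^{(p* - n') s} = |f|^{p*}`. -/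
lemma exponents {n : ℕ} (hn : 2 ≤ n) {p : ℝ} (hp : 1 < p) (hpn : p < n) {ps pp θ : ℝ}
    (hps : ps = n * p / (n - p)) (hpp : pp = p / (p - 1)) (hθ : θ = 1 - 1 / (n : ℝ)) :
    0 < θ ∧ 0 < ps ∧ p.HolderConjugate pp ∧ (ps * θ).HolderConjugate (pp * θ) ∧
      ps / pp = ps * θ - 1 ∧ (ps - 1 / θ) * (pp * θ) = ps ∧ 0 < ps - 1 / θ := by
  have hn' : (2 : ℝ) ≤ n := by exact_mod_cast hn
  have hp0 : 0 < p := by linarith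
  have hnp : (0 : ℝ) < n - p := by linarith
  have hp1 : 0 < p - 1 := by linarith
  have hn1 : (0 : ℝ) < n - 1 := by linarith
  have hn0 : (0 : ℝ) < n := by linarith
  have hθ' : θ = (n - 1) / n := by rw [hθ]; field_simp
  have hr : ps * θ - 1 = n * (p - 1) / (n - p) := by rw [hps, hθ']; field_simp; ring
  have hrpos : 0 < ps * θ - 1 := by rw [hr]; positivity
  have hθ0 : 0 < θ := by rw [hθ']; positivity
  refine ⟨hθ0, by rw [hps]; positivity, ?_, ?_, ?_, ?_, ?_⟩
  · rw [Real.holderConjugate_iff]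
    refine ⟨hp, ?_⟩
    rw [hpp]; field_simp; ring
  · rw [Real.holderConjugate_iff]
    refine ⟨by linarith, ?_⟩
    rw [hps, hpp, hθ']; field_simp; ring
  · rw [hr, hps, hpp]; field_simp
  · rw [hps, hpp, hθ']; field_simp; ring
  · rw [sub_pos, div_lt_iff₀ hθ0]; linarith

lemma lintegral_pow_lt_top {n : ℕ} {u : En n → ℝ≥0∞}
    (hu : ∀ R : ℝ, 0 < R → ∫⁻ x in closedBall (0 : En n) R, u x ≠ ∞) {f : En n → ℝ}
    (hf : Continuous f) (hc : HasCompactSupport f) {a : ℝ} (ha : 0 < a) :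
    ∫⁻ x, ‖f x‖ₑ ^ a * u x ≠ ∞ := by
  obtain ⟨b, hb⟩ := hf.bounded_above_of_compact_support hc
  obtain ⟨R, hR0, hR⟩ := hc.isCompact.isBounded.subset_closedBall_lt 0 0
  have hle : ∀ x, ‖f x‖ₑ ^ a * u x ≤
      (closedBall (0 : En n) R).indicator (fun x => ENNReal.ofReal b ^ a * u x) x := by
    intro x
    by_cases hx : x ∈ closedBall (0 : En n) R
    · rw [indicator_of_mem hx]
      gcongr
      rw [← ofReal_norm]
      exact ENNReal.ofReal_le_ofReal (hb x)
    · rw [indicator_of_notMem hx, image_eq_zero_of_notMem_tsupport (mt (@hR x) hx)]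
      simp [ENNReal.zero_rpow_of_pos ha]
  refine ne_top_of_le_ne_top ?_ (lintegral_mono hle)
  rw [lintegral_indicator measurableSet_closedBall, lintegral_const_mul' _ _ (by finiteness)]
  exact ENNReal.mul_ne_top (by finiteness) (hu R hR0)

/-- The weighted Sobolev inequality for a measurable weight with values in `(0, ∞)` satisfying the
`A_{p,p*}` condition on balls, written with unnormalised integrals. With `u = W^{p*}`,
`σ = W^{-p'}`, `I = ∫ |f|^{p*} u` and `v = |f|^{p* - n'} u`, the endpoint inequality for the
density `v`, Hölder and `buckley` give `I ≤ C K ‖W ∇f‖_p^{n'} I^{1/s}`, and the finite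
factor `I^{1/s}` is divided out. -/
lemma main_abs {n : ℕ} (hn : 2 ≤ n) {p : ℝ} (hp : 1 < p) (hpn : p < n) {ps pp θ : ℝ}
    (hps : ps = n * p / (n - p)) (hpp : pp = p / (p - 1)) (hθ : θ = 1 - 1 / (n : ℝ)) :
    ∃ C : ℝ≥0∞, C ≠ ∞ ∧ ∀ W : En n → ℝ≥0∞, Measurable W → (∀ x, W x ≠ 0) → (∀ x, W x ≠ ∞) →
    ∀ K : ℝ≥0∞, K ≠ ∞ →
    (∀ (x : En n) (R : ℝ), 0 < R → (∫⁻ y in closedBall x R, W y ^ ps) *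
      (∫⁻ y in closedBall x R, W y ^ (-pp)) ^ (ps / pp) ≤ K * volume (closedBall x R) ^ (ps * θ)) →
    ∀ f : En n → ℝ, ContDiff ℝ 1 f → HasCompactSupport f →
      (∫⁻ x, (W x * ‖f x‖ₑ) ^ ps) ^ (1 / ps) ≤
        C * K ^ θ * (∫⁻ x, (W x * ‖fderiv ℝ f x‖ₑ) ^ p) ^ (1 / p) := by
  obtain ⟨hθ0, hps0, hpc, hrs, hr1, hexp, hpq⟩ := exponents hn hp hpn hps hpp hθ
  obtain ⟨C1, hC1, h1⟩ := exists_endpoint_const hn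
  obtain ⟨C2, hC2, h2⟩ := buckley n hrs
  rw [← hθ] at h1
  set r := ps * θ with hr
  set s := pp * θ with hs
  set q := 1 / θ with hq
  have hr0 : 0 < r := hrs.pos
  have hs0 : 0 < s := hrs.symm.pos
  have hpp0 : 0 < pp := hpc.symm.pos
  have hr1' : 0 < r - 1 := by linarith [hrs.lt]
  refine ⟨(C1 * C2 ^ (1 / s)) ^ θ, ?_, ?_⟩
  · have := hθ0.le; have : 0 ≤ 1 / s := by positivity
    finiteness
  intro W hW hW0 hWt K hKt hK f hf hc
  set u : En n → ℝ≥0∞ := fun x => W x ^ ps with hu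
  set σ : En n → ℝ≥0∞ := fun x => W x ^ (-pp) with hσ
  have hum : Measurable u := hW.pow_const _
  have hσm : Measurable σ := hW.pow_const _
  have hu0 : ∀ x, u x ≠ 0 := fun x => by simp [hu, ENNReal.rpow_eq_zero_iff, hW0, hWt]
  have hσ0 : ∀ x, σ x ≠ 0 := fun x => by simp [hσ, ENNReal.rpow_eq_zero_iff, hW0, hWt]
  have hσt : ∀ x, σ x ≠ ∞ := fun x => by simp [hσ, ENNReal.rpow_eq_top_iff, hW0, hWt]
  have hσu : ∀ x, σ x ^ (1 - r) = u x := fun x => by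
    simp only [hσ, hu]
    rw [← ENNReal.rpow_mul]
    congr 1
    rw [div_eq_iff hpp0.ne'] at hr1
    linarith
  have hK' : ∀ (x : En n) (R : ℝ), 0 < R → (volume.withDensity u) (closedBall x R) *
      (volume.withDensity σ) (closedBall x R) ^ (r - 1) ≤ K * volume (closedBall x R) ^ r := by
    intro x R hR
    rw [withDensity_apply _ measurableSet_closedBall, withDensity_apply _ measurableSet_closedBall,
      ← hr1]
    exact hK x R hR
  -- `u` is locally integrable: otherwise the left-hand side of the `A_r` condition is infinite
  have huloc : ∀ R : ℝ, 0 < R → ∫⁻ x in closedBall (0 : En n) R, u x ≠ ∞ := by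
    intro R hR htop
    have h3 := hK' 0 R hR
    rw [withDensity_apply u measurableSet_closedBall, htop, ENNReal.top_mul] at h3
    · have hv : volume (closedBall (0 : En n) R) ≠ ∞ := measure_closedBall_lt_top.ne
      have h5 := hr0.le
      exact ne_top_of_le_ne_top (by finiteness) h3 rfl
    · have := withDensity_ball_ne_zero hσm hσ0 0 hR
      simp [ENNReal.rpow_eq_zero_iff, this, hr1'.not_gt]
  set h : En n → ℝ≥0∞ := fun x => ‖f x‖ₑ ^ (ps - q) with hh
  have hfm : Measurable fun x => ‖f x‖ₑ := hf.continuous.enorm.measurable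
  have hhm : Measurable h := hfm.pow_const _
  set v : En n → ℝ≥0∞ := fun x => h x * u x with hv
  have hvm : Measurable v := hhm.mul hum
  have hvt : (volume.withDensity v) univ ≠ ∞ := by
    rw [withDensity_apply _ MeasurableSet.univ, Measure.restrict_univ]
    exact lintegral_pow_lt_top huloc hf.continuous hc hpq
  set I := ∫⁻ x, ‖f x‖ₑ ^ ps * u x with hI
  have hIt : I ≠ ∞ := lintegral_pow_lt_top huloc hf.continuous hc hps0
  have hq0 : 0 < q := by positivity
  have eI : ∫⁻ x, (W x * ‖f x‖ₑ) ^ ps = I := by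
    refine lintegral_congr fun x => ?_
    rw [ENNReal.mul_rpow_of_nonneg _ _ hps0.le, mul_comm]
  have eI2 : ∫⁻ x, ‖f x‖ₑ ^ q ∂(volume.withDensity v) = I := by
    rw [lintegral_withDensity_eq_lintegral_mul _ hvm (hfm.pow_const _)]
    refine lintegral_congr fun x => ?_
    simp only [Pi.mul_apply, hv, hh]
    rw [mul_right_comm, ← ENNReal.rpow_add_of_nonneg _ _ hpq.le hq0.le, sub_add_cancel]
  have eI3 : ∫⁻ x, h x ^ s * u x = I := by
    refine lintegral_congr fun x => ?_
    simp only [hh]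
    rw [← ENNReal.rpow_mul, hexp]
  set N := (∫⁻ x, (W x * ‖fderiv ℝ f x‖ₑ) ^ p) ^ (1 / p) with hN
  have hf'm : Measurable fun x => ‖fderiv ℝ f x‖ₑ :=
    (hf.continuous_fderiv (by norm_num)).enorm.measurable
  have hMm : Measurable (Mx volume v) := measurable_Mx volume hvm
  have hHolder : ∫⁻ y, ‖fderiv ℝ f y‖ₑ * Mx volume v y ^ θ ≤
      N * (∫⁻ y, Mx volume v y ^ s * σ y) ^ (1 / pp) := by
    calc _ = ∫⁻ y, ((fun y => W y * ‖fderiv ℝ f y‖ₑ) * fun y => Mx volume v y ^ θ * (W y)⁻¹) y := by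
          refine lintegral_congr fun y => ?_
          simp only [Pi.mul_apply]
          calc _ = ‖fderiv ℝ f y‖ₑ * Mx volume v y ^ θ * (W y * (W y)⁻¹) := by
                rw [ENNReal.mul_inv_cancel (hW0 y) (hWt y), mul_one]
            _ = _ := by ring
      _ ≤ _ := ENNReal.lintegral_mul_le_Lp_mul_Lq volume hpc (hW.mul hf'm).aemeasurable
          ((hMm.pow_const _).mul hW.inv).aemeasurable
      _ = _ := by
          congr 2
          refine lintegral_congr fun y => ?_
          rw [ENNReal.mul_rpow_of_nonneg _ _ hpp0.le, ← ENNReal.rpow_mul, ENNReal.inv_rpow,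
            ← ENNReal.rpow_neg, mul_comm θ pp]
  have hB := h2 u σ hum hσm hu0 hσ0 hσt hσu K hKt hK' h hhm
  rw [eI3] at hB
  have hE := h1 f hf hc v hvt
  rw [eI2] at hE
  clear_value N
  -- the factor `I^{1/s}` comes from `(I^{1/p'})^{n'}`, since `n' / p' = 1 / s`
  have es : q * (1 / pp) = 1 / s := by rw [hq, hs]; field_simp
  have key : I ≤ C1 * C2 ^ (1 / s) * K * N ^ q * I ^ (1 / s) := by
    calc I ≤ C1 * (N * (C2 * K ^ s * I) ^ (1 / pp)) ^ q := by
          refine hE.trans ?_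
          gcongr
          refine hHolder.trans ?_
          gcongr
      _ = C1 * (N ^ q * (C2 * K ^ s * I) ^ (1 / s)) := by
          rw [ENNReal.mul_rpow_of_nonneg _ _ hq0.le, ← ENNReal.rpow_mul, mul_comm (1 / pp) q, es]
      _ = _ := by
          have : 0 ≤ 1 / s := by positivity
          rw [ENNReal.mul_rpow_of_nonneg _ _ this, ENNReal.mul_rpow_of_nonneg _ _ this,
            ← ENNReal.rpow_mul, mul_one_div_cancel hs0.ne', ENNReal.rpow_one]
          ring
  rw [eI]
  by_cases hI0 : I = 0
  · rw [hI0, ENNReal.zero_rpow_of_pos (by positivity)]; exact zero_le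
  have hIs0 : I ^ (1 / s) ≠ 0 := by simp [ENNReal.rpow_eq_zero_iff, hI0, hIt]
  have hIst : I ^ (1 / s) ≠ ∞ := ENNReal.rpow_ne_top_of_nonneg (by positivity) hIt
  have hrs' : 1 / r = 1 - 1 / s := by
    have := hrs.inv_add_inv_eq_one
    simp only [one_div]; linarith
  have key2 : I ^ (1 / r) ≤ C1 * C2 ^ (1 / s) * K * N ^ q := by
    rw [hrs', ENNReal.rpow_sub _ _ hI0 hIt, ENNReal.rpow_one]
    exact ENNReal.div_le_of_le_mul key
  have e3 : 1 / ps = 1 / r * θ := by rw [hr]; field_simp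
  rw [e3, ENNReal.rpow_mul]
  refine (ENNReal.rpow_le_rpow key2 hθ0.le).trans_eq ?_
  rw [ENNReal.mul_rpow_of_nonneg _ _ hθ0.le, ENNReal.mul_rpow_of_nonneg _ _ hθ0.le,
    ← ENNReal.rpow_mul, hq, one_div_mul_cancel hθ0.ne', ENNReal.rpow_one]

/-! ### From cubes to balls, and degenerate weights -/

lemma volume_cube {n : ℕ} (a : En n) (h : ℝ) : volume (cube a h) = ENNReal.ofReal h ^ n := by
  have e : cube a h = (WithLp.ofLp : En n → Fin n → ℝ) ⁻¹'
      (Icc (WithLp.ofLp a) (fun i => a i + h)) := by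
    ext y
    simp [cube, Pi.le_def, forall_and]
  rw [e, (PiLp.volume_preserving_ofLp (Fin n)).measure_preimage measurableSet_Icc.nullMeasurableSet,
    Real.volume_Icc_pi]
  simp

lemma closedBall_subset_cube {n : ℕ} (x : En n) (R : ℝ) :
    closedBall x R ⊆ cube (WithLp.toLp 2 (fun i => x i - R)) (2 * R) := by
  intro y hy i
  have h1 : ‖(y - x) i‖ ≤ ‖y - x‖ := PiLp.norm_apply_le _ i
  have h2 : ‖y - x‖ ≤ R := by rw [← dist_eq_norm]; exact hy
  have h3 : |y i - x i| ≤ R := h1.trans h2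
  rw [abs_le] at h3
  constructor
  · change x i - R ≤ y i; linarith
  · change y i ≤ x i - R + 2 * R; linarith

/-- The `A_{p,p*}` condition passes from cubes to balls, up to a dimensional factor, by enclosing each
ball in a concentric cube. -/
lemma ball_condition (n : ℕ) {ps pp r : ℝ} (hr : ps / pp = r - 1) (hr1 : 1 < r) :
    ∃ τ : ℝ≥0∞, τ ≠ ∞ ∧ ∀ w : En n → ℝ, ∀ (x : En n) (R : ℝ), 0 < R →
      (∫⁻ y in closedBall x R, ENNReal.ofReal (w y) ^ ps) *
        (∫⁻ y in closedBall x R, ENNReal.ofReal (w y) ^ (-pp)) ^ (ps / pp) ≤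
      τ * Apq n ps pp w * volume (closedBall x R) ^ r := by
  have hω0 : volume (closedBall (0 : En n) 1) ≠ 0 := (measure_closedBall_pos volume _ one_pos).ne'
  have hωt : volume (closedBall (0 : En n) 1) ≠ ∞ := measure_closedBall_lt_top.ne
  set ω := volume (closedBall (0 : En n) 1)
  have hr0 : 0 ≤ r := by linarith
  have hr1' : 0 ≤ r - 1 := by linarith
  refine ⟨(2 ^ n * ω⁻¹) ^ r, by finiteness, ?_⟩
  intro w x R hR
  rw [hr]
  set a : En n := WithLp.toLp 2 (fun i => x i - R)
  set Q := cube a (2 * R) with hQ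
  have hvQ : volume Q = 2 ^ n * ω⁻¹ * volume (closedBall x R) := by
    have : volume (closedBall x R) = ENNReal.ofReal R ^ n * ω := by
      rw [Measure.addHaar_closedBall' _ _ hR.le, finrank_euclideanSpace_fin,
        ENNReal.ofReal_pow hR.le]
    rw [hQ, volume_cube, this, ENNReal.ofReal_mul (by norm_num), mul_pow, ENNReal.ofReal_ofNat]
    calc _ = 2 ^ n * ENNReal.ofReal R ^ n * (ω⁻¹ * ω) := by
          rw [ENNReal.inv_mul_cancel hω0 hωt, mul_one]
      _ = _ := by ring
  have hQ0 : volume Q ≠ 0 := by rw [hQ, volume_cube]; simp; intro h; linarith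
  have hQt : volume Q ≠ ∞ := by rw [hQ, volume_cube]; finiteness
  have hA : avgE (fun x => ENNReal.ofReal (w x) ^ ps) Q *
      avgE (fun x => ENNReal.ofReal (w x) ^ (-pp)) Q ^ (r - 1) ≤ Apq n ps pp w := by
    rw [← hr]
    exact le_iSup_of_le a (le_iSup_of_le (2 * R) (le_iSup_of_le (by linarith) le_rfl))
  have hsub : closedBall x R ⊆ Q := closedBall_subset_cube x R
  have hunit : volume Q ^ r * ((volume Q)⁻¹ * (volume Q)⁻¹ ^ (r - 1)) = 1 := by
    have e1 : (volume Q)⁻¹ * (volume Q)⁻¹ ^ (r - 1) = (volume Q)⁻¹ ^ r := by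
      conv_rhs => rw [show r = 1 + (r - 1) by ring]
      rw [ENNReal.rpow_add_of_nonneg _ _ zero_le_one hr1', ENNReal.rpow_one]
    rw [e1, ← ENNReal.mul_rpow_of_nonneg _ _ hr0, ENNReal.mul_inv_cancel hQ0 hQt, ENNReal.one_rpow]
  set Iu := ∫⁻ y in Q, ENNReal.ofReal (w y) ^ ps
  set Is := ∫⁻ y in Q, ENNReal.ofReal (w y) ^ (-pp)
  have hA' : ((volume Q)⁻¹ * Iu) * ((volume Q)⁻¹ * Is) ^ (r - 1) ≤ Apq n ps pp w := hA
  calc _ ≤ Iu * Is ^ (r - 1) := by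
        gcongr
        · exact lintegral_mono_set hsub
        · exact lintegral_mono_set hsub
    _ = volume Q ^ r * ((volume Q)⁻¹ * (volume Q)⁻¹ ^ (r - 1)) * (Iu * Is ^ (r - 1)) := by
        rw [hunit, one_mul]
    _ = volume Q ^ r * (((volume Q)⁻¹ * Iu) * ((volume Q)⁻¹ * Is) ^ (r - 1)) := by
        rw [ENNReal.mul_rpow_of_nonneg _ _ hr1']; ring
    _ ≤ volume Q ^ r * Apq n ps pp w := by gcongr
    _ = _ := by
        rw [hvQ, ENNReal.mul_rpow_of_nonneg _ _ hr0]; ring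

lemma ae_of_forall_ball {n : ℕ} {P : En n → Prop} (m : ℕ)
    (h : ∀ k : ℕ, m ≤ k → ∀ᵐ x ∂(volume.restrict (closedBall (0 : En n) k)), P x) :
    ∀ᵐ x, P x := by
  have hu : (⋃ k : ℕ, closedBall (0 : En n) ((max m k : ℕ) : ℝ)) = univ := by
    refine eq_univ_of_forall fun z => mem_iUnion.2 ?_
    obtain ⟨k, hk⟩ := exists_nat_ge ‖z‖
    refine ⟨k, ?_⟩
    rw [mem_closedBall_zero_iff]
    exact hk.trans (by exact_mod_cast le_max_right m k)
  rw [← Measure.restrict_univ (μ := (volume : Measure (En n))), ← hu, ae_restrict_iUnion_iff]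
  exact fun k => h _ (le_max_left m k)

/-- Under the `A_{p,p*}` condition a weight vanishes almost everywhere or almost nowhere. The degenerate
case is consistent with the condition because of the convention `0 * ∞ = 0`. -/
lemma weight_dichotomy {n : ℕ} {W : En n → ℝ≥0∞} (hW : AEMeasurable W volume) {ps pp r : ℝ}
    (hps : 0 < ps) (hpp : 0 < pp) {K : ℝ≥0∞} (hKt : K ≠ ∞) (hr : 0 ≤ r)
    (hK : ∀ (x : En n) (R : ℝ), 0 < R → (∫⁻ y in closedBall x R, W y ^ ps) *
      (∫⁻ y in closedBall x R, W y ^ (-pp)) ^ (ps / pp) ≤ K * volume (closedBall x R) ^ r) :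
    (∀ᵐ x, W x = 0) ∨ (∀ᵐ x, W x ≠ 0) := by
  refine or_iff_not_imp_right.2 fun hne => ?_
  obtain ⟨m, hm⟩ : ∃ m : ℕ, ¬ ∀ᵐ x ∂(volume.restrict (closedBall (0 : En n) m)), W x ≠ 0 := by
    by_contra! hcon
    exact hne (ae_of_forall_ball 0 fun k _ => hcon k)
  refine ae_of_forall_ball (m + 1) fun k hk => ?_
  have hmk : (m : ℝ) ≤ k := by exact_mod_cast (Nat.le_succ m).trans hk
  have hk0 : (0 : ℝ) < k := by exact_mod_cast (Nat.succ_pos m).trans_le hk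
  have hBt : volume (closedBall (0 : En n) (k : ℝ)) ≠ ∞ := measure_closedBall_lt_top.ne
  have htop : ∫⁻ y in closedBall (0 : En n) k, W y ^ (-pp) = ∞ := by
    by_contra hcon
    have h1 := ae_lt_top' ((hW.pow_const (-pp)).restrict) hcon
    refine hm ?_
    refine ae_restrict_of_ae_restrict_of_subset (closedBall_subset_closedBall hmk) ?_
    filter_upwards [h1] with x hx h0
    rw [h0, ENNReal.zero_rpow_of_neg (by linarith)] at hx
    exact lt_irrefl _ hx
  have h2 := hK 0 k hk0
  rw [htop, ENNReal.top_rpow_of_pos (by positivity)] at h2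
  have h3 : ∫⁻ y in closedBall (0 : En n) k, W y ^ ps = 0 := by
    by_contra hcon
    rw [ENNReal.mul_top hcon] at h2
    exact ne_top_of_le_ne_top (by finiteness) h2 rfl
  rw [lintegral_eq_zero_iff' (hW.pow_const ps).restrict] at h3
  filter_upwards [h3] with x hx
  simpa [ENNReal.rpow_eq_zero_iff, hps, hps.not_gt] using hx

end

/-- precise weighted GNS inequality, `1 < p < n`:
`‖w f‖_{L^{p*}} ≤ c [w]_{A_{p,p*}}^{1/n'} ‖w |∇f|‖_{L^p}` with `p* = np/(n-p)`, `1/n' = (n-1)/n`. -/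
theorem statement1 (n : ℕ) (hn : 2 ≤ n) (p : ℝ) (hp : 1 < p) (hpn : p < n) :
    ∃ c : ℝ, 0 < c ∧ ∀ w : En n → ℝ, (∀ x, 0 ≤ w x) → LocallyIntegrable w volume →
      Apq n (n * p / (n - p)) (p / (p - 1)) w < ∞ →
      ∀ f : En n → ℝ, ContDiff ℝ (⊤ : ℕ∞) f → HasCompactSupport f →
        lpNorm (n * p / (n - p))
            (fun x => ENNReal.ofReal (w x) * ENNReal.ofReal |f x|) volume ≤
          ENNReal.ofReal c * Apq n (n * p / (n - p)) (p / (p - 1)) w ^ (((n : ℝ) - 1) / n) *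
            lpNorm p (fun x => ENNReal.ofReal (w x) * ENNReal.ofReal ‖fderiv ℝ f x‖) volume := by
  obtain ⟨ps, hps⟩ : ∃ ps : ℝ, ps = n * p / (n - p) := ⟨_, rfl⟩
  obtain ⟨pp, hpp⟩ : ∃ pp : ℝ, pp = p / (p - 1) := ⟨_, rfl⟩
  obtain ⟨θ, hθ⟩ : ∃ θ : ℝ, θ = 1 - 1 / (n : ℝ) := ⟨_, rfl⟩
  obtain ⟨hθ0, hps0, hpc, hrs, hr1, hexp, hpq⟩ := exponents hn hp hpn hps hpp hθ
  obtain ⟨C, hC, hmain⟩ := main_abs hn hp hpn hps hpp hθ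
  obtain ⟨τ, hτ, hball⟩ := ball_condition n hr1 hrs.lt
  have hθ' : ((n : ℝ) - 1) / n = θ := by
    have : (n : ℝ) ≠ 0 := by positivity
    rw [hθ]; field_simp
  rw [← hps, ← hpp, hθ']
  have hD : C * τ ^ θ ≠ ∞ := by have := hθ0.le; finiteness
  refine ⟨(C * τ ^ θ).toReal + 1, by positivity, ?_⟩
  intro w _ hwl hA f hf hc
  have hKt : τ * Apq n ps pp w ≠ ∞ := ENNReal.mul_ne_top hτ hA.ne
  have hWm : AEMeasurable (fun x => ENNReal.ofReal (w x)) volume :=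
    hwl.aestronglyMeasurable.aemeasurable.ennreal_ofReal
  have hf1 : ContDiff ℝ 1 f := hf.of_le (by exact_mod_cast le_top)
  have e1 : ∀ x, ENNReal.ofReal |f x| = ‖f x‖ₑ := fun x => by rw [← Real.norm_eq_abs, ofReal_norm]
  simp only [_root_.lpNorm, e1, ofReal_norm]
  rcases weight_dichotomy hWm hps0 hpc.symm.pos hKt hrs.nonneg (hball w) with h0 | hne
  · have : ∫⁻ x, (ENNReal.ofReal (w x) * ‖f x‖ₑ) ^ ps = 0 := by
      rw [← lintegral_zero (μ := (volume : Measure (En n)))]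
      refine lintegral_congr_ae ?_
      filter_upwards [h0] with x hx
      simp [hx, ENNReal.zero_rpow_of_pos hps0]
    rw [this, ENNReal.zero_rpow_of_pos (by positivity)]
    exact zero_le
  -- an everywhere positive measurable representative of the weight
  let W : En n → ℝ≥0∞ := fun x => if hWm.mk _ x = 0 ∨ hWm.mk _ x = ∞ then 1 else hWm.mk _ x
  have hWmeas : Measurable W := by
    refine Measurable.ite ?_ measurable_const hWm.measurable_mk
    exact (hWm.measurable_mk (measurableSet_singleton 0)).union
      (hWm.measurable_mk (measurableSet_singleton ∞))
  have hW0 : ∀ x, W x ≠ 0 := fun x => by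
    simp only [W]; split_ifs with hx
    · exact one_ne_zero
    · exact fun h => hx (Or.inl h)
  have hWt : ∀ x, W x ≠ ∞ := fun x => by
    simp only [W]; split_ifs with hx
    · exact ENNReal.one_ne_top
    · exact fun h => hx (Or.inr h)
  have hae : ∀ᵐ x, ENNReal.ofReal (w x) = W x := by
    filter_upwards [hWm.ae_eq_mk, hne] with x hx hx0
    simp only [W]
    rw [if_neg, hx]
    rw [← hx, not_or]
    exact ⟨hx0, ENNReal.ofReal_ne_top⟩
  have hfin := hmain W hWmeas hW0 hWt (τ * Apq n ps pp w) hKt (fun x R hR => by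
    have := hball w x R hR
    have c1 : ∫⁻ y in Metric.closedBall x R, ENNReal.ofReal (w y) ^ ps = ∫⁻ y in Metric.closedBall x R, W y ^ ps :=
      lintegral_congr_ae (ae_restrict_of_ae (hae.mono fun y hy => by simp only [hy]))
    have c2 : ∫⁻ y in Metric.closedBall x R, ENNReal.ofReal (w y) ^ (-pp) =
        ∫⁻ y in Metric.closedBall x R, W y ^ (-pp) :=
      lintegral_congr_ae (ae_restrict_of_ae (hae.mono fun y hy => by simp only [hy]))
    rwa [c1, c2] at this) f hf1 hc
  have c3 : ∫⁻ x, (ENNReal.ofReal (w x) * ‖f x‖ₑ) ^ ps = ∫⁻ x, (W x * ‖f x‖ₑ) ^ ps :=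
    lintegral_congr_ae (hae.mono fun y hy => by simp only [hy])
  have c4 : ∫⁻ x, (ENNReal.ofReal (w x) * ‖fderiv ℝ f x‖ₑ) ^ p =
      ∫⁻ x, (W x * ‖fderiv ℝ f x‖ₑ) ^ p :=
    lintegral_congr_ae (hae.mono fun y hy => by simp only [hy])
  rw [c3, c4]
  refine hfin.trans ?_
  rw [ENNReal.mul_rpow_of_nonneg _ _ hθ0.le, ← mul_assoc]
  gcongr
  rw [ENNReal.le_ofReal_iff_toReal_le hD (by positivity)]
  linarith
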